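/- Let α ∈ (0,π) and, for i = 1, 2, let w_i, L_i ∈ (0,∞) and let u_i : P(α, w_i, L_i) → ℝ be a translator having boundary value −∞ at every point of the horizontal sides of its parallelogram and boundary value +∞ at every point of the nonhorizontal sides. If w₁ ≤ w₂ and L₁ ≥ L₂, then w₁ = w₂, L₁ = L₂, and u₁ − u₂ is constant. -/

import Mathlib

/-!
Write `Wᵢ = √(1 + |Duᵢ|²)` and `Xᵢ = Duᵢ / Wᵢ`. The translator equation is `div Xᵢ = 1 / Wᵢ`, so the
field `e^{u₁} (X₁ - X₂)` has divergence `e^{u₁} D` with `D = W₁ - (1 + ⟨Du₁, Du₂⟩) / W₂`. By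
Cauchy–Schwarz `D ≥ 0`, with equality only where `Du₁ = Du₂`. The argument takes place on the
parallelogram `Ω = P(α, w₁, L₂)`, which lies in both domains, and shows that `D` vanishes there.

The field is multiplied by the cutoff `η(u₂) ζ(y)`, where `η` decreases from `1` to `0` on
`[t, t + 1]` and `ζ` vanishes near the two horizontal sides. The product has compact support in `Ω`,
because `u₂ → +∞` at the nonhorizontal sides (`isCompact_cutoff`), so its divergence integrates to
zero. The derivative of `η(u₂)` enters through `⟨Du₂, X₁ - X₂⟩ ≤ 1`, which has a favourable sign up
to an error bounded by `C e^{u₁}` on `{u₂ ≥ t}`; the derivative of `ζ` costs at most `2 e^{u₁} |ζ'|`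
(`flux_pointwise`, `flux_estimate`). Both errors vanish in the limit provided that `e^{u₁}` is
integrable on `Ω` and its integrals over horizontal segments tend to zero at the horizontal sides
(`slices_tendsto`, `cutoff_tail`).

That integrability is a growth estimate: near a nonhorizontal side `u₁ ≤ K - β log P` for some
`β < 1`, where `P` is the distance to the side (`barrier`). It follows from the maximum principle,
with the strict supersolution `-β log P - (k/2) S²` for `S` a coordinate along the side. Since
`P ^ (-β)` is integrable, dominated convergence and the boundary value `-∞` give the claims.

Hence `D = 0` and `u₁ - u₂` is constant on `Ω` (`excess_eq_zero`, `sub_const_of_bvp`). If `w₁ < w₂`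
or `L₂ < L₁`, one of the functions would be infinite at a point where the other one is finite.
-/

open Real Filter MeasureTheory Set

noncomputable section

/-- Partial derivative with respect to the first variable. -/
def pdx (u : ℝ × ℝ → ℝ) (p : ℝ × ℝ) : ℝ := fderiv ℝ u p (1, 0)

/-- Partial derivative with respect to the second variable. -/
def pdy (u : ℝ × ℝ → ℝ) (p : ℝ × ℝ) : ℝ := fderiv ℝ u p (0, 1)

/-- `u` is a smooth solution of the translator equation
`(1 + u_y²)u_xx − 2u_x u_y u_xy + (1 + u_x²)u_yy = 1 + u_x² + u_y²` on `Ω`. -/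
def IsTranslatorOn (Ω : Set (ℝ × ℝ)) (u : ℝ × ℝ → ℝ) : Prop :=
  ContDiffOn ℝ (⊤ : ℕ∞) u Ω ∧
  ∀ p ∈ Ω,
    (1 + (pdy u p) ^ 2) * pdx (pdx u) p
      - 2 * pdx u p * pdy u p * pdy (pdx u) p
      + (1 + (pdx u p) ^ 2) * pdy (pdy u) p
    = 1 + (pdx u p) ^ 2 + (pdy u p) ^ 2

/-- The open parallelogram `P(α, w, L)`. -/
def Pgram (α w L : ℝ) : Set (ℝ × ℝ) :=
  {p | 0 < p.2 ∧ p.2 < w ∧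
       p.2 * Real.cos α / Real.sin α < p.1 ∧
       p.1 < L + p.2 * Real.cos α / Real.sin α}

/-- `u` is a translator on `P(α,w,L)` with boundary value `−∞` at every point of the
horizontal sides and `+∞` at every point of the nonhorizontal sides. -/
def ScherkBVP (α w L : ℝ) (u : ℝ × ℝ → ℝ) : Prop :=
  IsTranslatorOn (Pgram α w L) u ∧
  (∀ x : ℝ, 0 < x → x < L →
      Tendsto u (nhdsWithin (x, 0) (Pgram α w L)) atBot) ∧
  (∀ x : ℝ, w * Real.cos α / Real.sin α < x → x < L + w * Real.cos α / Real.sin α →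
      Tendsto u (nhdsWithin (x, w) (Pgram α w L)) atBot) ∧
  (∀ y : ℝ, 0 < y → y < w →
      Tendsto u (nhdsWithin (y * Real.cos α / Real.sin α, y) (Pgram α w L)) atTop) ∧
  (∀ y : ℝ, 0 < y → y < w →
      Tendsto u (nhdsWithin (L + y * Real.cos α / Real.sin α, y) (Pgram α w L)) atTop)

/-- The region `Ω(α, w)`: a "parallelogram" whose right-hand side is at infinity. -/
def OmegaReg (α w : ℝ) : Set (ℝ × ℝ) :=
  {p | 0 < p.2 ∧ p.2 < w ∧ p.2 * Real.cos α / Real.sin α < p.1}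

/-- `u` is a translator on `Ω(α,w)` with boundary value `−∞` at every point of the two
horizontal edges and `+∞` at every point of the nonhorizontal edge. -/
def ScherkenoidBVP (α w : ℝ) (u : ℝ × ℝ → ℝ) : Prop :=
  IsTranslatorOn (OmegaReg α w) u ∧
  (∀ x : ℝ, 0 < x → Tendsto u (nhdsWithin (x, 0) (OmegaReg α w)) atBot) ∧
  (∀ x : ℝ, w * Real.cos α / Real.sin α < x →
      Tendsto u (nhdsWithin (x, w) (OmegaReg α w)) atBot) ∧
  (∀ y : ℝ, 0 < y → y < w →
      Tendsto u (nhdsWithin (y * Real.cos α / Real.sin α, y) (OmegaReg α w)) atTop)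

/-- The full strip `ℝ × (0, w)`. -/
def TStrip (w : ℝ) : Set (ℝ × ℝ) := {p | 0 < p.2 ∧ p.2 < w}

/-- The half strip `(0,∞) × (0, w)`. -/
def THalfStrip (w : ℝ) : Set (ℝ × ℝ) := {p | 0 < p.1 ∧ 0 < p.2 ∧ p.2 < w}

/-- A pitchfork function of width `w`: a translator on `ℝ × (0,w)` with boundary value
`+∞` at `(x,0)` for `x < 0`, `−∞` at `(x,0)` for `x > 0`, and `−∞` at `(x,w)` for all `x`. -/
def IsPitchfork (w : ℝ) (u : ℝ × ℝ → ℝ) : Prop :=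
  IsTranslatorOn (TStrip w) u ∧
  (∀ x : ℝ, x < 0 → Tendsto u (nhdsWithin (x, 0) (TStrip w)) atTop) ∧
  (∀ x : ℝ, 0 < x → Tendsto u (nhdsWithin (x, 0) (TStrip w)) atBot) ∧
  (∀ x : ℝ, Tendsto u (nhdsWithin (x, w) (TStrip w)) atBot)

/-- The downward-tilted grim reaper `g_w` of width `w ≥ π`, normalized by `g_w(0,w/2) = 0`. -/
def grimTilt (w : ℝ) (p : ℝ × ℝ) : ℝ :=
  (w / π) ^ 2 * Real.log (Real.sin (π * p.2 / w)) - p.1 * Real.sqrt ((w / π) ^ 2 - 1)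

/-! ### Second-order conditions at an interior maximum -/

lemma second_deriv_test {f f' : ℝ → ℝ} {f'' : ℝ}
    (h1 : ∀ᶠ t in nhds 0, HasDerivAt f (f' t) t) (h2 : HasDerivAt f' f'' 0)
    (hmax : IsLocalMax f 0) : f' 0 = 0 ∧ f'' ≤ 0 := by
  have h0 : HasDerivAt f (f' 0) 0 := h1.self_of_nhds
  have hz : f' 0 = 0 := hmax.hasDerivAt_eq_zero h0
  refine ⟨hz, ?_⟩
  by_contra hpos
  push Not at hpos
  have hd : deriv f =ᶠ[nhds 0] f' := h1.mono fun t ht => ht.deriv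
  have hdd : deriv (deriv f) 0 = f'' := by rw [hd.deriv_eq, h2.deriv]
  have hmin : IsLocalMin f 0 :=
    isLocalMin_of_deriv_deriv_pos (by rw [hdd]; exact hpos) (by rw [h0.deriv, hz]) h0.continuousAt
  -- A point that is both a local minimum and a local maximum has `f` constant nearby.
  have hc : f =ᶠ[nhds 0] fun _ => f 0 := by
    filter_upwards [hmin, hmax] with t a b using le_antisymm b a
  have hd0 : deriv f =ᶠ[nhds 0] fun _ => 0 := by
    have := hc.deriv
    simpa using this
  have : deriv (deriv f) 0 = 0 := by rw [hd0.deriv_eq]; simp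
  linarith

lemma line_deriv {u : ℝ × ℝ → ℝ} {p : ℝ × ℝ} (hu : ContDiffAt ℝ 2 u p) (a b : ℝ) :
    (∀ᶠ t : ℝ in nhds 0, HasDerivAt (fun t : ℝ => u (p + t • (a, b)))
        (fderiv ℝ u (p + t • (a, b)) (a, b)) t) ∧
    HasDerivAt (fun t : ℝ => fderiv ℝ u (p + t • (a, b)) (a, b))
      (a ^ 2 * pdx (pdx u) p + 2 * a * b * pdy (pdx u) p + b ^ 2 * pdy (pdy u) p) 0 := by
  have hline : ∀ t : ℝ, HasDerivAt (fun t : ℝ => p + t • ((a, b) : ℝ × ℝ)) (a, b) t := by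
    intro t
    simpa using ((hasDerivAt_id t).smul_const ((a, b) : ℝ × ℝ)).const_add p
  have hcont : Tendsto (fun t : ℝ => p + t • ((a, b) : ℝ × ℝ)) (nhds 0) (nhds p) := by
    have := (hline 0).continuousAt.tendsto
    simpa using this
  constructor
  · have hev : ∀ᶠ q in nhds p, DifferentiableAt ℝ u q := by
      filter_upwards [hu.eventually (by simp)] with q hq using hq.differentiableAt (by simp)
    filter_upwards [hcont.eventually hev] with t ht
    exact ht.hasFDerivAt.comp_hasDerivAt t (hline t)
  · have hd : DifferentiableAt ℝ (fderiv ℝ u) p :=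
      (hu.fderiv_right (m := 1) (by norm_num)).differentiableAt (by simp)
    have hB : HasFDerivAt (fderiv ℝ u) (fderiv ℝ (fderiv ℝ u) p) (p + (0 : ℝ) • ((a, b) : ℝ × ℝ)) := by
      simpa using hd.hasFDerivAt
    have hA : HasDerivAt (fun t : ℝ => fderiv ℝ u (p + t • ((a, b) : ℝ × ℝ)))
        (fderiv ℝ (fderiv ℝ u) p (a, b)) 0 := hB.comp_hasDerivAt 0 (hline 0)
    have h1 : HasDerivAt (fun t : ℝ => fderiv ℝ u (p + t • ((a, b) : ℝ × ℝ)) (a, b))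
        (fderiv ℝ (fderiv ℝ u) p (a, b) (a, b)) 0 :=
      (ContinuousLinearMap.apply ℝ ℝ ((a, b) : ℝ × ℝ)).hasFDerivAt.comp_hasDerivAt 0 hA
    have hsymm : IsSymmSndFDerivAt ℝ u p := hu.isSymmSndFDerivAt (by simp)
    have hpd : ∀ v w : ℝ × ℝ, fderiv ℝ (fun q => fderiv ℝ u q v) p w
        = fderiv ℝ (fderiv ℝ u) p w v := by
      intro v w
      have h : HasFDerivAt (fun q => fderiv ℝ u q v)
          ((ContinuousLinearMap.apply ℝ ℝ v).comp (fderiv ℝ (fderiv ℝ u) p)) p :=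
        (ContinuousLinearMap.apply ℝ ℝ v).hasFDerivAt.comp p hd.hasFDerivAt
      rw [h.fderiv]; rfl
    have e : ((a, b) : ℝ × ℝ) = a • (1, 0) + b • (0, 1) := by simp
    convert h1 using 1
    change a ^ 2 * fderiv ℝ (fun q => fderiv ℝ u q (1, 0)) p (1, 0)
      + 2 * a * b * fderiv ℝ (fun q => fderiv ℝ u q (1, 0)) p (0, 1)
      + b ^ 2 * fderiv ℝ (fun q => fderiv ℝ u q (0, 1)) p (0, 1) = _
    rw [hpd, hpd, hpd, e]
    simp only [map_add, map_smul, add_apply, smul_apply,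
      smul_eq_mul]
    rw [hsymm.eq (1, 0) (0, 1)]
    ring

/-! ### An integrable upper barrier near the sides with boundary value `+∞` -/

/-- The function `-β log P - (k/2) S²`, with `P`, `S` orthonormal affine coordinates, is a strict
supersolution of the translator equation where `1 + k² S² ≤ β (1 + k)`, so a translator cannot
touch it from below at an interior point. -/
lemma no_touching {u : ℝ × ℝ → ℝ} {q : ℝ × ℝ} {a b e k β : ℝ} (hu : ContDiffAt ℝ 2 u q)
    (hpde : (1 + (pdy u q) ^ 2) * pdx (pdx u) q - 2 * pdx u q * pdy u q * pdy (pdx u) q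
      + (1 + (pdx u q) ^ 2) * pdy (pdy u) q = 1 + (pdx u q) ^ 2 + (pdy u q) ^ 2)
    (hab : a ^ 2 + b ^ 2 = 1) (hk : 0 < k) (hβ : 0 < β)
    (hP : 0 < a * q.1 + b * q.2 + e)
    (hS : 1 + k ^ 2 * (-b * q.1 + a * q.2) ^ 2 ≤ β * (1 + k))
    (hmax : IsLocalMax (fun z : ℝ × ℝ => u z
      - (-β * log (a * z.1 + b * z.2 + e) - k / 2 * (-b * z.1 + a * z.2) ^ 2)) q) : False := by
  set P := a * q.1 + b * q.2 + e with hPdef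
  set S := -b * q.1 + a * q.2 with hSdef
  have key : ∀ v₁ v₂ : ℝ,
      fderiv ℝ u q (v₁, v₂) = -β * (a * v₁ + b * v₂) / P - k * S * (-b * v₁ + a * v₂) ∧
      v₁ ^ 2 * pdx (pdx u) q + 2 * v₁ * v₂ * pdy (pdx u) q + v₂ ^ 2 * pdy (pdy u) q
        ≤ β * (a * v₁ + b * v₂) ^ 2 / P ^ 2 - k * (-b * v₁ + a * v₂) ^ 2 := by
    intro v₁ v₂
    obtain ⟨h1, h2⟩ := line_deriv hu v₁ v₂
    set A := a * v₁ + b * v₂ with hA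
    set B := -b * v₁ + a * v₂ with hB
    have hline : Tendsto (fun t : ℝ => q + t • ((v₁, v₂) : ℝ × ℝ)) (nhds 0) (nhds q) := by
      have : Continuous (fun t : ℝ => q + t • ((v₁, v₂) : ℝ × ℝ)) := by fun_prop
      simpa using this.tendsto 0
    have hmax' : IsLocalMax (fun t : ℝ => u (q + t • ((v₁, v₂) : ℝ × ℝ))
        - (-β * log (P + t * A) - k / 2 * (S + t * B) ^ 2)) 0 := by
      have := hline.eventually hmax
      filter_upwards [this] with t ht
      simp only [Prod.fst_add, Prod.snd_add, Prod.smul_fst, Prod.smul_snd, smul_eq_mul] at ht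
      have e1 : a * (q.1 + t * v₁) + b * (q.2 + t * v₂) + e = P + t * A := by
        rw [hPdef, hA]; ring
      have e2 : -b * (q.1 + t * v₁) + a * (q.2 + t * v₂) = S + t * B := by
        rw [hSdef, hB]; ring
      rw [e1, e2, ← hPdef, ← hSdef] at ht
      simpa using ht
    have hlin : ∀ (c d t : ℝ), HasDerivAt (fun t : ℝ => c + t * d) d t := by
      intro c d t
      simpa using ((hasDerivAt_id t).mul_const d).const_add c
    have hPpos : ∀ᶠ t : ℝ in nhds 0, 0 < P + t * A := by
      have : Tendsto (fun t : ℝ => P + t * A) (nhds 0) (nhds P) := by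
        simpa using (hlin P A 0).continuousAt.tendsto
      exact this.eventually (lt_mem_nhds hP)
    have d1 : ∀ᶠ t : ℝ in nhds 0, HasDerivAt (fun t : ℝ => u (q + t • ((v₁, v₂) : ℝ × ℝ))
        - (-β * log (P + t * A) - k / 2 * (S + t * B) ^ 2))
        (fderiv ℝ u (q + t • ((v₁, v₂) : ℝ × ℝ)) (v₁, v₂)
          - (-β * (A / (P + t * A)) - k / 2 * (2 * (S + t * B) * B))) t := by
      filter_upwards [h1, hPpos] with t ht hp
      refine (ht.sub ((((hlin P A t).log hp.ne').const_mul (-β)).sub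
        (((hlin S B t).pow 2).const_mul (k / 2)))).congr_deriv ?_
      simp
    have d2 : HasDerivAt (fun t : ℝ => fderiv ℝ u (q + t • ((v₁, v₂) : ℝ × ℝ)) (v₁, v₂)
          - (-β * (A / (P + t * A)) - k / 2 * (2 * (S + t * B) * B)))
        ((v₁ ^ 2 * pdx (pdx u) q + 2 * v₁ * v₂ * pdy (pdx u) q + v₂ ^ 2 * pdy (pdy u) q)
          - (-β * ((0 * (P + 0 * A) - A * A) / (P + 0 * A) ^ 2) - k / 2 * (2 * B * B))) 0 := by
      have hp0 : P + 0 * A ≠ 0 := by simpa using hP.ne'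
      exact h2.sub ((((hasDerivAt_const (0 : ℝ) A).div (hlin P A 0) hp0).const_mul (-β)).sub
        ((((hlin S B 0).const_mul 2).mul_const B).const_mul (k / 2)))
    obtain ⟨r1, r2⟩ := second_deriv_test d1 d2 hmax'
    simp only [zero_smul, add_zero, zero_mul] at r1 r2
    constructor
    · linear_combination r1
    · have : β * A ^ 2 / P ^ 2 - k * B ^ 2
          = -β * ((0 - A * A) / P ^ 2) - k / 2 * (2 * B * B) := by ring
      rw [this]; linarith
  obtain ⟨g1, l1⟩ := key 1 0
  obtain ⟨g2, l2⟩ := key 0 1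
  obtain ⟨-, l3⟩ := key (pdy u q) (-(pdx u q))
  change pdx u q = _ at g1
  change pdy u q = _ at g2
  have hP0 := hP.ne'
  have c1 : a * pdy u q + b * (-(pdx u q)) = -k * S := by
    rw [g1, g2]; field_simp; linear_combination (-k * S * P) * hab
  have c2 : -b * pdy u q + a * (-(pdx u q)) = β / P := by
    rw [g1, g2]; field_simp; linear_combination (β) * hab
  have c3 : pdx u q ^ 2 + pdy u q ^ 2 = β ^ 2 / P ^ 2 + k ^ 2 * S ^ 2 := by
    rw [g1, g2]; field_simp
    linear_combination (β ^ 2 + k ^ 2 * S ^ 2 * P ^ 2) * hab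
  rw [c1, c2] at l3
  have hsum : 1 + (β ^ 2 / P ^ 2 + k ^ 2 * S ^ 2) ≤
      β / P ^ 2 - k + β * (-k * S) ^ 2 / P ^ 2 - k * (β / P) ^ 2 := by
    have e1 : β * (a * 1 + b * 0) ^ 2 / P ^ 2 + β * (a * 0 + b * 1) ^ 2 / P ^ 2 = β / P ^ 2 := by
      rw [← add_div]; congr 1; linear_combination β * hab
    have e2 : k * (-b * 1 + a * 0) ^ 2 + k * (-b * 0 + a * 1) ^ 2 = k := by
      linear_combination k * hab
    rw [← c3]
    linarith
  have e3 : β / P ^ 2 - k + β * (-k * S) ^ 2 / P ^ 2 - k * (β / P) ^ 2 - β ^ 2 / P ^ 2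
      = β / P ^ 2 * (1 + k ^ 2 * S ^ 2 - β * (1 + k)) - k := by
    field_simp; ring
  have : β / P ^ 2 * (1 + k ^ 2 * S ^ 2 - β * (1 + k)) ≤ 0 :=
    mul_nonpos_of_nonneg_of_nonpos (by positivity) (by linarith)
  nlinarith [sq_nonneg (k * S)]

/-- A continuous function on a bounded set that stays below `M` near the missing boundary points,
and reaches `M` somewhere, attains its maximum. -/
lemma exists_max_of_boundary {D : Set (ℝ × ℝ)} {f : ℝ × ℝ → ℝ} {M : ℝ}
    (hD : Bornology.IsBounded D) (hf : ContinuousOn f D)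
    (hbd : ∀ z ∈ closure D, z ∉ D → ∀ᶠ q in nhdsWithin z D, f q < M)
    {q₀ : ℝ × ℝ} (hq₀ : q₀ ∈ D) (hM : M ≤ f q₀) : ∃ q ∈ D, IsMaxOn f D q := by
  set K := {q ∈ D | M ≤ f q} with hK
  have hKD : K ⊆ D := fun q h => h.1
  have hclosed : IsClosed K := by
    rw [← closure_subset_iff_isClosed]
    intro z hz
    have hzD : z ∈ closure D := closure_mono hKD hz
    have hfreq : ∃ᶠ q in nhdsWithin z D, M ≤ f q := by
      rw [frequently_nhdsWithin_iff]
      rw [mem_closure_iff_frequently] at hz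
      exact hz.mono fun q hq => ⟨hq.2, hq.1⟩
    by_cases hzm : z ∈ D
    · refine ⟨hzm, ?_⟩
      by_contra hlt
      push Not at hlt
      have := (hf z hzm).eventually (gt_mem_nhds hlt)
      obtain ⟨q, h1, h2⟩ := (hfreq.and_eventually this).exists
      linarith
    · obtain ⟨q, h1, h2⟩ := (hfreq.and_eventually (hbd z hzD hzm)).exists
      linarith
  have hcomp : IsCompact K := Metric.isCompact_of_isClosed_isBounded hclosed (hD.subset hKD)
  obtain ⟨q, hq, hmax⟩ := hcomp.exists_isMaxOn ⟨q₀, hq₀, hM⟩ (hf.mono hKD)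
  refine ⟨q, hq.1, fun z hz => ?_⟩
  by_cases hzM : M ≤ f z
  · exact hmax ⟨hz, hzM⟩
  · exact (not_le.1 hzM).le.trans hq.2

lemma bddAbove_of_locally {C Ω : Set (ℝ × ℝ)} {u : ℝ × ℝ → ℝ} (hC : IsCompact C)
    (h : ∀ z ∈ C, ∃ M : ℝ, ∀ᶠ q in nhdsWithin z Ω, u q ≤ M) :
    ∃ M : ℝ, ∀ q ∈ C, q ∈ Ω → u q ≤ M := by
  refine hC.induction_on (p := fun s => ∃ M : ℝ, ∀ q ∈ s, q ∈ Ω → u q ≤ M) ⟨0, by simp⟩ ?_ ?_ ?_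
  · rintro s t hst ⟨M, hM⟩
    exact ⟨M, fun q hq => hM q (hst hq)⟩
  · rintro s t ⟨M, hM⟩ ⟨N, hN⟩
    refine ⟨max M N, ?_⟩
    rintro q (hq | hq) hΩ
    · exact (hM q hq hΩ).trans (le_max_left _ _)
    · exact (hN q hq hΩ).trans (le_max_right _ _)
  · intro z hz
    obtain ⟨M, hM⟩ := h z hz
    rw [eventually_nhdsWithin_iff] at hM
    exact ⟨_, mem_nhdsWithin_of_mem_nhds hM, M, fun q hq hΩ => hq hΩ⟩

/-- On the half of the parallelogram adjacent to a nonhorizontal side, `exp u` is `O(P ^ (-β))`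
for some `β < 1`, where `P = a x + b y + e` is the distance to that side. -/
lemma barrier {Ω : Set (ℝ × ℝ)} {u : ℝ × ℝ → ℝ} {a b e w ℓ : ℝ}
    (hab : a ^ 2 + b ^ 2 = 1) (ha : a ≠ 0) (hℓ : 0 < ℓ)
    (hΩ : ∀ q : ℝ × ℝ, q ∈ Ω ↔ 0 < q.2 ∧ q.2 < w ∧ 0 < a * q.1 + b * q.2 + e ∧
      a * q.1 + b * q.2 + e < ℓ)
    (hu : IsTranslatorOn Ω u)
    (hbot : ∀ z : ℝ × ℝ, z.2 = 0 ∨ z.2 = w → 0 < a * z.1 + b * z.2 + e →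
      a * z.1 + b * z.2 + e < ℓ → Tendsto u (nhdsWithin z Ω) atBot) :
    ∃ β K : ℝ, 0 < β ∧ β < 1 ∧ ∀ q ∈ Ω, a * q.1 + b * q.2 + e ≤ ℓ / 2 →
      u q ≤ K - β * log (a * q.1 + b * q.2 + e) := by
  set P : ℝ × ℝ → ℝ := fun q => a * q.1 + b * q.2 + e with hPd
  set S : ℝ × ℝ → ℝ := fun q => -b * q.1 + a * q.2 with hSd
  have hPc : Continuous P := by fun_prop
  have hSc : Continuous S := by fun_prop
  have hopen : IsOpen Ω := by
    have : Ω = {q | 0 < q.2} ∩ {q | q.2 < w} ∩ {q | 0 < P q} ∩ {q | P q < ℓ} := by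
      ext q; rw [hΩ]; simp [hPd, and_assoc]
    rw [this]
    exact (((isOpen_lt continuous_const continuous_snd).inter
      (isOpen_lt continuous_snd continuous_const)).inter
      (isOpen_lt continuous_const hPc)).inter (isOpen_lt hPc continuous_const)
  have hbdd : Bornology.IsBounded Ω := by
    rw [isBounded_iff_forall_norm_le]
    refine ⟨max ((ℓ + |b| * w + |e|) / |a|) w, fun q hq => ?_⟩
    obtain ⟨h1, h2, h3, h4⟩ := (hΩ q).1 hq
    rw [Prod.norm_def]
    refine max_le_max ?_ (by rw [Real.norm_eq_abs, abs_of_pos h1]; exact h2.le)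
    rw [le_div_iff₀ (abs_pos.2 ha), Real.norm_eq_abs, ← abs_mul]
    have hb : |b * q.2| ≤ |b| * w := by
      rw [abs_mul, abs_of_pos h1]; gcongr
    have := abs_le.1 hb
    have he := abs_le.1 (le_refl |e|)
    rw [abs_le]; constructor <;> linarith
  obtain ⟨R, hR⟩ := hbdd.isCompact_closure.exists_bound_of_continuousOn hSc.continuousOn
  have hR' : ∀ q ∈ Ω, (S q) ^ 2 ≤ R ^ 2 := by
    intro q hq
    have := hR q (subset_closure hq)
    rw [Real.norm_eq_abs] at this
    exact sq_le_sq' (abs_le.1 this).1 (abs_le.1 this).2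
  -- With this `k`, the quantity `k² S²` is at most `k / 2`, which leaves room for some `β < 1`.
  set k : ℝ := 1 / (2 * (1 + R ^ 2)) with hk
  have hkpos : 0 < k := by positivity
  have hkR : k * R ^ 2 ≤ 1 / 2 := by
    rw [hk, div_mul_eq_mul_div, div_le_div_iff₀ (by positivity) (by norm_num)]
    nlinarith [sq_nonneg R]
  set β : ℝ := (1 + k / 2) / (1 + k) with hβ
  have hβpos : 0 < β := by positivity
  have hβ1 : β < 1 := by rw [hβ, div_lt_one (by positivity)]; linarith
  have hβk : β * (1 + k) = 1 + k / 2 := by rw [hβ]; field_simp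
  set m : ℝ := 2 * ℓ / 3 with hm
  have hmℓ : m < ℓ := by rw [hm]; linarith
  have hm0 : 0 < m := by positivity
  have hucont : ContinuousOn u Ω := hu.1.continuousOn
  have hC : IsCompact (closure Ω ∩ {q | P q = m}) :=
    hbdd.isCompact_closure.inter_right (isClosed_eq hPc continuous_const)
  have hclΩ : ∀ z ∈ closure Ω, 0 ≤ z.2 ∧ z.2 ≤ w := by
    intro z hz
    have : closure Ω ⊆ {q : ℝ × ℝ | 0 ≤ q.2} ∩ {q | q.2 ≤ w} :=
      closure_minimal (fun q hq => ⟨((hΩ q).1 hq).1.le, ((hΩ q).1 hq).2.1.le⟩)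
        ((isClosed_le continuous_const continuous_snd).inter
          (isClosed_le continuous_snd continuous_const))
    exact this hz
  have hbdry : ∀ z ∈ closure Ω, z ∉ Ω → 0 < P z → P z < ℓ → Tendsto u (nhdsWithin z Ω) atBot := by
    intro z hz hzn h0 h1
    obtain ⟨y0, y1⟩ := hclΩ z hz
    refine hbot z ?_ h0 h1
    rcases y0.eq_or_lt with h | h
    · exact Or.inl h.symm
    · rcases y1.eq_or_lt with h' | h'
      · exact Or.inr h'
      · exact absurd ((hΩ z).2 ⟨h, h', h0, h1⟩) hzn
  obtain ⟨K₀, hK₀⟩ : ∃ M : ℝ, ∀ q ∈ closure Ω ∩ {q | P q = m}, q ∈ Ω → u q ≤ M := by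
    refine bddAbove_of_locally hC fun z hz => ?_
    have hPz : P z = m := hz.2
    by_cases hzΩ : z ∈ Ω
    · refine ⟨u z + 1, ?_⟩
      filter_upwards [(hucont z hzΩ).eventually (gt_mem_nhds (lt_add_one (u z)))] with q hq
        using hq.le
    · exact ⟨0, (hbdry z hz.1 hzΩ (by rw [hPz]; exact hm0)
        (by rw [hPz]; exact hmℓ)).eventually (eventually_le_atBot 0)⟩
  set K : ℝ := K₀ + β * log m + k / 2 * R ^ 2 + 1 with hKd
  -- Comparison on `ε < P < m` with the barrier shifted to be infinite on the line `P = ε`, so that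
  -- no information on `u` at the side `P = 0` is needed; then `ε → 0`.
  have claim : ∀ ε : ℝ, 0 < ε → ∀ q ∈ Ω, ε < P q → P q < m → u q < K - β * log (P q - ε) := by
    intro ε hε q₀ hq₀ hq1 hq2
    by_contra hcon
    push Not at hcon
    set D : Set (ℝ × ℝ) := Ω ∩ ({q | ε < P q} ∩ {q | P q < m}) with hDd
    have hDopen : IsOpen D :=
      hopen.inter ((isOpen_lt continuous_const hPc).inter (isOpen_lt hPc continuous_const))
    set f : ℝ × ℝ → ℝ := fun z => u z
      - (-β * log (a * z.1 + b * z.2 + (e - ε)) - k / 2 * (-b * z.1 + a * z.2) ^ 2) with hf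
    have hfe : ∀ z, f z = u z + β * log (P z - ε) + k / 2 * (S z) ^ 2 := by
      intro z
      have : a * z.1 + b * z.2 + (e - ε) = P z - ε := by simp only [hPd]; ring
      simp only [hf, this, hSd]; ring
    have hlogc : ContinuousOn (fun z => log (P z - ε)) {q | ε < P q} :=
      ContinuousOn.log (by fun_prop) fun z hz => (sub_pos.2 hz).ne'
    have hfc : ContinuousOn f ({q | ε < P q} ∩ Ω) := by
      have : f = fun z => u z + β * log (P z - ε) + k / 2 * (S z) ^ 2 := funext hfe
      rw [this]
      exact ((hucont.mono inter_subset_right).add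
        ((hlogc.mono inter_subset_left).const_smul β)).add (by fun_prop)
    have hlogm : ∀ z ∈ D, log (P z - ε) ≤ log m := by
      intro z hz
      have h1 : ε < P z := hz.2.1
      have h2 : P z < m := hz.2.2
      exact log_le_log (by linarith) (by linarith)
    have hquad : ∀ z ∈ Ω, k / 2 * (S z) ^ 2 ≤ k / 2 * R ^ 2 := fun z hz =>
      mul_le_mul_of_nonneg_left (hR' z hz) (by positivity)
    have hbd : ∀ z ∈ closure D, z ∉ D → ∀ᶠ q in nhdsWithin z D, f q < K := by
      intro z hz hzD
      have hzΩ : z ∈ closure Ω := closure_mono inter_subset_left hz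
      have hz' : ε ≤ P z ∧ P z ≤ m := by
        have : closure D ⊆ {q | ε ≤ P q} ∩ {q | P q ≤ m} :=
          closure_minimal (fun q hq => ⟨(show ε < P q from hq.2.1).le, (show P q < m from hq.2.2).le⟩)
            ((isClosed_le continuous_const hPc).inter (isClosed_le hPc continuous_const))
        exact this hz
      have hmono : nhdsWithin z D ≤ nhdsWithin z Ω := nhdsWithin_mono z inter_subset_left
      by_cases hzm : z ∈ Ω
      · rcases hz'.1.eq_or_lt with h | h
        -- On `P = ε` the logarithm tends to `-∞` while `u` stays bounded.
        · have hlog : Tendsto (fun q => log (P q - ε)) (nhdsWithin z D) atBot := by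
            refine Real.tendsto_log_nhdsGT_zero.comp ?_
            refine tendsto_nhdsWithin_iff.2 ⟨?_, ?_⟩
            · have : Tendsto (fun q => P q - ε) (nhds z) (nhds (P z - ε)) :=
                (hPc.sub continuous_const).tendsto z
              rw [← h, sub_self] at this
              exact this.mono_left nhdsWithin_le_nhds
            · filter_upwards [self_mem_nhdsWithin] with q hq
              exact sub_pos.2 (show ε < P q from hq.2.1)
          have hub := hmono ((hucont z hzm).eventually (gt_mem_nhds (lt_add_one (u z))))
          have hlb := hlog.eventually (eventually_lt_atBot ((K - u z - 1 - k / 2 * R ^ 2) / β))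
          filter_upwards [hub, hlb, self_mem_nhdsWithin] with q h1 h2 h3
          rw [lt_div_iff₀ hβpos] at h2
          rw [hfe]
          have := hquad q h3.1
          have h1' : u q < u z + 1 := h1
          linarith
        · rcases hz'.2.eq_or_lt with h' | h'
          · have hcz : ContinuousAt f z :=
              hfc.continuousAt ((isOpen_lt continuous_const hPc).inter hopen |>.mem_nhds ⟨h, hzm⟩)
            have hlt : f z < K := by
              rw [hfe, hKd]
              have h1 := hK₀ z ⟨hzΩ, h'⟩ hzm
              have h2 := hquad z hzm
              have h3 : log (P z - ε) ≤ log m :=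
                log_le_log (by linarith) (by linarith)
              have := mul_le_mul_of_nonneg_left h3 hβpos.le
              linarith
            exact (hcz.eventually (gt_mem_nhds hlt)).filter_mono nhdsWithin_le_nhds
          · exact absurd ⟨hzm, h, h'⟩ hzD
      · have ht := (hbdry z hzΩ hzm (by linarith [hz'.1]) (by linarith [hz'.2])).mono_left hmono
        filter_upwards [ht.eventually (eventually_lt_atBot (K - β * log m - k / 2 * R ^ 2)),
          self_mem_nhdsWithin] with q h1 h2
        rw [hfe]
        have := hquad q h2.1
        have := mul_le_mul_of_nonneg_left (hlogm q h2) hβpos.le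
        linarith
    have hq₀D : q₀ ∈ D := ⟨hq₀, hq1, hq2⟩
    have hge : K ≤ f q₀ := by
      rw [hfe]
      have : 0 ≤ k / 2 * (S q₀) ^ 2 := by positivity
      linarith
    obtain ⟨q, hqD, hmax⟩ := exists_max_of_boundary (hbdd.subset inter_subset_left)
      (hfc.mono fun z hz => ⟨hz.2.1, hz.1⟩) hbd hq₀D hge
    have hloc : IsLocalMax f q := hmax.isLocalMax (hDopen.mem_nhds hqD)
    have hSq := hR' q hqD.1
    refine no_touching (e := e - ε) ((hu.1.contDiffAt (hopen.mem_nhds hqD.1)).of_le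
      (WithTop.coe_le_coe.2 (le_top : (2 : ℕ∞) ≤ ⊤)))
      (hu.2 q hqD.1) hab hkpos hβpos ?_ ?_ hloc
    · have : ε < P q := hqD.2.1
      simp only [hPd] at this
      linarith
    · change 1 + k ^ 2 * (S q) ^ 2 ≤ _
      rw [hβk]
      have : k ^ 2 * (S q) ^ 2 ≤ k * (k * R ^ 2) := by
        have := mul_le_mul_of_nonneg_left hSq (sq_nonneg k)
        linarith
      have := mul_le_mul_of_nonneg_left hkR hkpos.le
      linarith
  refine ⟨β, K, hβpos, hβ1, fun q hq hqℓ => ?_⟩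
  have hPq : 0 < P q := ((hΩ q).1 hq).2.2.1
  have hlim : Tendsto (fun ε => K - β * log (P q - ε)) (nhdsWithin 0 (Ioi 0))
      (nhds (K - β * log (P q))) := by
    have : ContinuousAt (fun ε => K - β * log (P q - ε)) 0 := by
      have h : ContinuousAt (fun ε => log (P q - ε)) 0 :=
        ContinuousAt.log (by fun_prop) (by simpa using hPq.ne')
      exact continuousAt_const.sub (continuousAt_const.mul h)
    have h2 := this.tendsto
    simp only [sub_zero] at h2
    exact h2.mono_left nhdsWithin_le_nhds
  refine ge_of_tendsto hlim ?_
  filter_upwards [Ioo_mem_nhdsGT hPq] with ε hε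
  have hqℓ' : P q ≤ ℓ / 2 := hqℓ
  exact (claim ε hε.1 q hq hε.2 (by rw [hm]; linarith)).le

/-! ### Shear coordinates and integrability of `exp u` -/

/-- The shear `(ξ, y) ↦ (ξ + y cot α, y)`, which maps the rectangle `(0, L) × (0, w)` onto
`P(α, w, L)` and preserves area. -/
def shear (α : ℝ) : (ℝ × ℝ) ≃ₜ (ℝ × ℝ) where
  toFun z := (z.1 + z.2 * cos α / sin α, z.2)
  invFun z := (z.1 - z.2 * cos α / sin α, z.2)
  left_inv z := by simp
  right_inv z := by simp
  continuous_toFun := by fun_prop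
  continuous_invFun := by fun_prop

lemma shear_apply (α ξ y : ℝ) : shear α (ξ, y) = (ξ + y * cos α / sin α, y) := rfl

lemma shear_preimage (α w L : ℝ) : shear α ⁻¹' Pgram α w L = Ioo 0 L ×ˢ Ioo 0 w := by
  ext ⟨ξ, y⟩
  simp only [mem_preimage, shear_apply, Pgram, mem_ofPred_eq, mem_prod, mem_Ioo]
  constructor
  · rintro ⟨h1, h2, h3, h4⟩
    exact ⟨⟨by linarith, by linarith⟩, h1, h2⟩
  · rintro ⟨⟨h1, h2⟩, h3, h4⟩
    exact ⟨h3, h4, by linarith, by linarith⟩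

lemma shear_mem {α w L ξ y : ℝ} (hξ : ξ ∈ Ioo 0 L) (hy : y ∈ Ioo 0 w) :
    shear α (ξ, y) ∈ Pgram α w L := by
  have : (ξ, y) ∈ shear α ⁻¹' Pgram α w L := by
    rw [shear_preimage]; exact ⟨hξ, hy⟩
  exact this

lemma shear_measurePreserving (α : ℝ) :
    MeasurePreserving (shear α) (volume : Measure (ℝ × ℝ)) volume := by
  have h1 : MeasurePreserving (fun p : ℝ × ℝ => (id p.1, p.2 + p.1 * cos α / sin α))
      ((volume : Measure ℝ).prod (volume : Measure ℝ)) (volume.prod volume) := by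
    refine (MeasurePreserving.id (volume : Measure ℝ)).skew_product
      (g := fun y x => x + y * cos α / sin α) (by fun_prop) ?_
    exact Eventually.of_forall fun y => map_add_right_eq_self volume _
  have h2 : MeasurePreserving Prod.swap ((volume : Measure ℝ).prod (volume : Measure ℝ))
      (volume.prod volume) := Measure.measurePreserving_swap
  exact (h2.comp h1).comp h2

lemma pgram_isOpen (α w L : ℝ) : IsOpen (Pgram α w L) := by
  have : Pgram α w L = shear α '' (Ioo 0 L ×ˢ Ioo 0 w) := by
    rw [← shear_preimage, image_preimage_eq _ (shear α).surjective]
  rw [this]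
  exact (shear α).isOpenMap _ (isOpen_Ioo.prod isOpen_Ioo)

lemma pgram_isPreconnected (α w L : ℝ) : IsPreconnected (Pgram α w L) := by
  have : Pgram α w L = shear α '' (Ioo 0 L ×ˢ Ioo 0 w) := by
    rw [← shear_preimage, image_preimage_eq _ (shear α).surjective]
  rw [this]
  exact (isPreconnected_Ioo.prod isPreconnected_Ioo).image _ (shear α).continuous.continuousOn

lemma pgram_mono {α w w' L L' : ℝ} (hw : w ≤ w') (hL : L ≤ L') :
    Pgram α w L ⊆ Pgram α w' L' := by
  rintro q ⟨h1, h2, h3, h4⟩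
  exact ⟨h1, by linarith, h3, by linarith⟩

/-- The barriers at the two nonhorizontal sides dominate `exp u`, uniformly in `y`, by an integrable
function of the horizontal coordinate `ξ`. -/
lemma exp_dominated {α w L : ℝ} {u : ℝ × ℝ → ℝ} (hα : α ∈ Ioo 0 π) (hL : 0 < L)
    (h : ScherkBVP α w L u) :
    ∃ g : ℝ → ℝ, IntegrableOn g (Ioo 0 L) ∧
      ∀ ξ ∈ Ioo 0 L, ∀ y ∈ Ioo 0 w, exp (u (shear α (ξ, y))) ≤ g ξ := by
  obtain ⟨hu, hb0, hbw, -, -⟩ := h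
  have hs : 0 < sin α := sin_pos_of_pos_of_lt_pi hα.1 hα.2
  have hs0 := hs.ne'
  have hdist : ∀ q : ℝ × ℝ, q.2 * cos α / sin α < q.1 ↔ 0 < sin α * q.1 + -cos α * q.2 + 0 := by
    intro q
    rw [div_lt_iff₀ hs]
    constructor <;> intro h <;> linarith
  have hdist' : ∀ q : ℝ × ℝ, q.1 < L + q.2 * cos α / sin α ↔
      sin α * q.1 + -cos α * q.2 + 0 < L * sin α := by
    intro q
    rw [← sub_lt_iff_lt_add', lt_div_iff₀ hs]
    constructor <;> intro h <;> linarith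
  have hbot : ∀ z : ℝ × ℝ, z.2 = 0 ∨ z.2 = w → 0 < sin α * z.1 + -cos α * z.2 + 0 →
      sin α * z.1 + -cos α * z.2 + 0 < L * sin α →
      Tendsto u (nhdsWithin z (Pgram α w L)) atBot := by
    rintro ⟨x, y⟩ hz h1 h2
    rw [← hdist] at h1
    rw [← hdist'] at h2
    rcases hz with hz | hz <;> simp only at hz h1 h2 <;> subst hz
    · exact hb0 x (by simpa using h1) (by simpa using h2)
    · exact hbw x h1 h2
  obtain ⟨β₁, K₁, hβ₁, hβ₁', hB₁⟩ := barrier (Ω := Pgram α w L) (a := sin α) (b := -cos α) (e := 0)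
    (w := w) (ℓ := L * sin α) (by rw [neg_sq]; exact sin_sq_add_cos_sq α) hs0 (by positivity)
    (fun q => by rw [← hdist, ← hdist']; rfl) hu hbot
  have hflip : ∀ q : ℝ × ℝ, -sin α * q.1 + cos α * q.2 + L * sin α
      = L * sin α - (sin α * q.1 + -cos α * q.2 + 0) := fun q => by ring
  obtain ⟨β₂, K₂, hβ₂, hβ₂', hB₂⟩ := barrier (Ω := Pgram α w L) (a := -sin α) (b := cos α)
    (e := L * sin α) (w := w) (ℓ := L * sin α) (by rw [neg_sq]; exact sin_sq_add_cos_sq α)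
    (neg_ne_zero.2 hs0) (by positivity)
    (fun q => by
      rw [hflip, sub_pos, sub_lt_self_iff, and_comm (a := _ < L * sin α), ← hdist, ← hdist']; rfl) hu
    (fun z hz h1 h2 => by
      rw [hflip] at h1 h2
      exact hbot z hz (by linarith) (by linarith))
  set C₁ := exp K₁ * (sin α) ^ (-β₁)
  set C₂ := exp K₂ * (sin α) ^ (-β₂)
  have hC₁ : 0 < C₁ := by positivity
  have hC₂ : 0 < C₂ := by positivity
  refine ⟨fun ξ => C₁ * ξ ^ (-β₁) + C₂ * (L - ξ) ^ (-β₂), ?_, ?_⟩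
  · have i1 : IntervalIntegrable (fun x : ℝ => x ^ (-β₁)) volume 0 L :=
      intervalIntegral.intervalIntegrable_rpow' (by linarith)
    have i2 : IntervalIntegrable (fun x : ℝ => x ^ (-β₂)) volume 0 L :=
      intervalIntegral.intervalIntegrable_rpow' (by linarith)
    have i3 : IntervalIntegrable (fun x : ℝ => (L - x) ^ (-β₂)) volume 0 L := by
      have := (i2.comp_sub_left L).symm
      simpa using this
    have i4 := (i1.const_mul C₁).add (i3.const_mul C₂)
    rw [intervalIntegrable_iff_integrableOn_Ioo_of_le hL.le] at i4
    exact i4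
  · intro ξ hξ y hy
    have hmem := shear_mem (α := α) hξ hy
    have hP : sin α * (shear α (ξ, y)).1 + -cos α * (shear α (ξ, y)).2 + 0 = sin α * ξ := by
      simp only [shear_apply]; field_simp; ring
    have hconv : ∀ K β d : ℝ, 0 < d → exp (K - β * log (sin α * d))
        = exp K * (sin α) ^ (-β) * d ^ (-β) := by
      intro K β d hd
      rw [mul_assoc, ← mul_rpow hs.le hd.le, rpow_def_of_pos (by positivity), ← exp_add]
      congr 1; ring
    have hξL : 0 < L - ξ := by linarith [hξ.2]
    have n1 : 0 < C₁ * ξ ^ (-β₁) := mul_pos hC₁ (rpow_pos_of_pos hξ.1 _)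
    have n2 : 0 < C₂ * (L - ξ) ^ (-β₂) := mul_pos hC₂ (rpow_pos_of_pos hξL _)
    rcases le_total ξ (L / 2) with hle | hle
    · have := hB₁ _ hmem (by rw [hP]; nlinarith)
      rw [hP] at this
      have := exp_le_exp.2 this
      rw [hconv _ _ _ hξ.1] at this
      change _ ≤ C₁ * ξ ^ (-β₁) at this
      linarith
    · have := hB₂ _ hmem (by rw [hflip, hP]; nlinarith)
      rw [hflip, hP, show L * sin α - sin α * ξ = sin α * (L - ξ) by ring] at this
      have := exp_le_exp.2 this
      rw [hconv _ _ _ hξL] at this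
      change _ ≤ C₂ * (L - ξ) ^ (-β₂) at this
      linarith

/-- `exp u` is integrable, and its integrals over horizontal segments tend to zero at the horizontal
sides, where `u` has boundary value `-∞`. -/
lemma slices_tendsto {α w L L' : ℝ} {u : ℝ × ℝ → ℝ} (hα : α ∈ Ioo 0 π) (hw : 0 < w) (hL : 0 < L)
    (h : ScherkBVP α w L u) (hL' : L' ≤ L) :
    IntegrableOn (fun z => exp (u (shear α z))) (Ioo 0 L' ×ˢ Ioo 0 w) ∧
    Tendsto (fun y => ∫ ξ in Ioo 0 L', exp (u (shear α (ξ, y)))) (nhdsWithin 0 (Ioi 0)) (nhds 0) ∧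
    Tendsto (fun y => ∫ ξ in Ioo 0 L', exp (u (shear α (ξ, y)))) (nhdsWithin w (Iio w)) (nhds 0)
    := by
  obtain ⟨g, hg, hle⟩ := exp_dominated hα hL h
  obtain ⟨hu, hb0, hbw, -, -⟩ := h
  have hsub : Ioo 0 L' ⊆ Ioo 0 L := Ioo_subset_Ioo_right hL'
  have hg' : IntegrableOn g (Ioo 0 L') := hg.mono_set hsub
  have hcont : ContinuousOn (fun z => exp (u (shear α z))) (Ioo 0 L' ×ˢ Ioo 0 w) := by
    refine continuous_exp.comp_continuousOn (hu.1.continuousOn.comp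
      (shear α).continuous.continuousOn ?_)
    rintro ⟨ξ, y⟩ ⟨h1, h2⟩
    exact shear_mem (hsub h1) h2
  have hmeasR : MeasurableSet (Ioo (0 : ℝ) L' ×ˢ Ioo (0 : ℝ) w) :=
    measurableSet_Ioo.prod measurableSet_Ioo
  have hslice : ∀ y ∈ Ioo 0 w, ContinuousOn (fun ξ => exp (u (shear α (ξ, y)))) (Ioo 0 L') := by
    intro y hy
    exact hcont.comp (f := fun ξ => (ξ, y)) (by fun_prop) fun ξ hξ => ⟨hξ, hy⟩
  have hdct : ∀ (l : Filter ℝ) [l.IsCountablyGenerated], (∀ᶠ y in l, y ∈ Ioo 0 w) →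
      (∀ ξ ∈ Ioo 0 L', Tendsto (fun y => u (shear α (ξ, y))) l atBot) →
      Tendsto (fun y => ∫ ξ in Ioo 0 L', exp (u (shear α (ξ, y)))) l (nhds 0) := by
    intro l _ hl hlim
    have := tendsto_integral_filter_of_dominated_convergence (μ := volume.restrict (Ioo 0 L'))
      (F := fun y ξ => exp (u (shear α (ξ, y)))) (f := fun _ => 0) (l := l) g ?_ ?_ hg' ?_
    · simpa using this
    · filter_upwards [hl] with y hy
      exact (hslice y hy).aestronglyMeasurable measurableSet_Ioo
    · filter_upwards [hl] with y hy
      filter_upwards [ae_restrict_mem measurableSet_Ioo] with ξ hξ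
      rw [Real.norm_eq_abs, abs_exp]
      exact hle ξ (hsub hξ) y hy
    · filter_upwards [ae_restrict_mem measurableSet_Ioo] with ξ hξ
      exact tendsto_exp_atBot.comp (hlim ξ hξ)
  have hpath : ∀ (ξ y₀ : ℝ) (s : Set ℝ), Tendsto (fun y => shear α (ξ, y)) (nhdsWithin y₀ s)
      (nhds (shear α (ξ, y₀))) := by
    intro ξ y₀ s
    have : Continuous (fun y => shear α (ξ, y)) := by fun_prop
    exact (this.tendsto y₀).mono_left nhdsWithin_le_nhds
  have hev0 : ∀ᶠ y in nhdsWithin 0 (Ioi 0), y ∈ Ioo 0 w := Ioo_mem_nhdsGT hw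
  have hevw : ∀ᶠ y in nhdsWithin w (Iio w), y ∈ Ioo 0 w := Ioo_mem_nhdsLT hw
  refine ⟨?_, hdct _ hev0 ?_, hdct _ hevw ?_⟩
  · have hgi : IntegrableOn (fun z : ℝ × ℝ => g z.1 * 1) (Ioo 0 L' ×ˢ Ioo 0 w) := by
      rw [IntegrableOn, Measure.volume_eq_prod, ← Measure.prod_restrict]
      refine Integrable.mul_prod (g := fun _ : ℝ => (1 : ℝ)) hg' ?_
      exact integrableOn_const (by simp)
    refine hgi.mono' (hcont.aestronglyMeasurable hmeasR) ?_
    filter_upwards [ae_restrict_mem hmeasR] with z hz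
    rw [Real.norm_eq_abs, abs_exp, mul_one]
    exact hle z.1 (hsub hz.1) z.2 hz.2
  · intro ξ hξ
    refine (hb0 ξ (hsub hξ).1 (hsub hξ).2).comp (tendsto_nhdsWithin_iff.2 ⟨?_, ?_⟩)
    · have := hpath ξ 0 (Ioi 0)
      simpa [shear_apply] using this
    · filter_upwards [hev0] with y hy using shear_mem (hsub hξ) hy
  · intro ξ hξ
    have := (hsub hξ).1
    have := (hsub hξ).2
    refine (hbw (ξ + w * cos α / sin α) (by linarith) (by linarith)).comp
      (tendsto_nhdsWithin_iff.2 ⟨?_, ?_⟩)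
    · exact hpath ξ w (Iio w)
    · filter_upwards [hevw] with y hy using shear_mem (hsub hξ) hy

/-! ### Cutoff functions -/

lemma deriv_smoothTransition_eq_zero {x : ℝ} (hx : x ≤ 0 ∨ 1 ≤ x) :
    deriv smoothTransition x = 0 := by
  rcases hx with hx | hx
  · refine IsLocalMin.deriv_eq_zero (Eventually.of_forall fun z => ?_)
    rw [smoothTransition.zero_of_nonpos hx]; exact smoothTransition.nonneg z
  · refine IsLocalMax.deriv_eq_zero (Eventually.of_forall fun z => ?_)
    rw [smoothTransition.one_of_one_le hx]; exact smoothTransition.le_one z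

lemma deriv_smoothTransition_continuous : Continuous (deriv smoothTransition) :=
  (smoothTransition.contDiff (n := 1)).continuous_deriv (by simp)

lemma deriv_smoothTransition_bound : ∃ C : ℝ, 0 < C ∧ ∀ x, deriv smoothTransition x ≤ C := by
  obtain ⟨C, hC⟩ := isCompact_Icc.exists_bound_of_continuousOn (s := Icc (0 : ℝ) 1)
    deriv_smoothTransition_continuous.continuousOn
  refine ⟨max C 1, by positivity, fun x => ?_⟩
  by_cases hx : x ∈ Icc (0 : ℝ) 1
  · exact (le_abs_self _).trans ((hC x hx).trans (le_max_left _ _))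
  · have : x ≤ 0 ∨ 1 ≤ x := by
      by_contra hcon
      push Not at hcon
      exact hx ⟨hcon.1.le, hcon.2.le⟩
    rw [deriv_smoothTransition_eq_zero this]; positivity

lemma deriv_smoothTransition_nonneg (x : ℝ) : 0 ≤ deriv smoothTransition x :=
  smoothTransition.monotone.deriv_nonneg

/-- The derivative of the vertical cutoff `y ↦ smoothTransition (y (w - y) / δ - 1)`. -/
def cutDeriv (w δ y : ℝ) : ℝ := deriv smoothTransition (y * (w - y) / δ - 1) * ((w - 2 * y) / δ)

/-- The error due to the vertical cutoff tends to zero with `δ`: its derivative is of size `1 / δ` on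
two strips of width comparable to `δ` along the horizontal sides, where the slices of `E` have small
integral. -/
lemma cutoff_tail {w L : ℝ} (hw : 0 < w) {E : ℝ × ℝ → ℝ} (hE0 : ∀ z, 0 ≤ E z)
    (hE : IntegrableOn E (Ioo 0 L ×ˢ Ioo 0 w))
    (h0 : Tendsto (fun y => ∫ ξ in Ioo 0 L, E (ξ, y)) (nhdsWithin 0 (Ioi 0)) (nhds 0))
    (h1 : Tendsto (fun y => ∫ ξ in Ioo 0 L, E (ξ, y)) (nhdsWithin w (Iio w)) (nhds 0))
    {ε : ℝ} (hε : 0 < ε) :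
    ∃ δ₀ > 0, ∀ δ, 0 < δ → δ < δ₀ →
      IntegrableOn (fun z => E z * |cutDeriv w δ z.2|) (Ioo 0 L ×ˢ Ioo 0 w) ∧
      ∫ z in Ioo 0 L ×ˢ Ioo 0 w, E z * |cutDeriv w δ z.2| ≤ ε := by
  obtain ⟨C, hC, hCb⟩ := deriv_smoothTransition_bound
  set F : ℝ → ℝ := fun y => ∫ ξ in Ioo 0 L, E (ξ, y) with hF
  set ε' := ε / (8 * C) with hε'
  have hε'0 : 0 < ε' := by positivity
  have hF0 : ∀ y, 0 ≤ F y := fun y => integral_nonneg fun ξ => hE0 _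
  obtain ⟨ρ₀, hρ₀, hF₀⟩ := mem_nhdsGT_iff_exists_Ioo_subset.1 (h0.eventually (gt_mem_nhds hε'0))
  obtain ⟨ρ₁, hρ₁, hF₁⟩ := mem_nhdsLT_iff_exists_Ioo_subset.1 (h1.eventually (gt_mem_nhds hε'0))
  simp only [mem_Ioi, mem_Iio] at hρ₀ hρ₁
  set ρ := min (min ρ₀ (w - ρ₁)) (w / 2) with hρ
  have hρpos : 0 < ρ := lt_min (lt_min hρ₀ (by linarith)) (by linarith)
  refine ⟨ρ * w / 4, by positivity, fun δ hδ hδ' => ?_⟩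
  set r := 4 * δ / w with hr
  have hr0 : 0 < r := by positivity
  have hrw : r * w = 4 * δ := by rw [hr]; field_simp
  have hrρ : r < ρ := by rw [hr, div_lt_iff₀ hw]; linarith
  have hr1 : r < ρ₀ := hrρ.trans_le ((min_le_left _ _).trans (min_le_left _ _))
  have hr2 : r < w - ρ₁ := hrρ.trans_le ((min_le_left _ _).trans (min_le_right _ _))
  have hr3 : r < w / 2 := hrρ.trans_le (min_le_right _ _)
  have hcd : ∀ y ∈ Ioo 0 w, |cutDeriv w δ y| ≤ C * (w / δ) := by
    intro y hy
    rw [cutDeriv, abs_mul, abs_of_nonneg (deriv_smoothTransition_nonneg _)]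
    refine mul_le_mul (hCb _) ?_ (abs_nonneg _) hC.le
    rw [abs_div, abs_of_pos hδ]
    gcongr
    rw [abs_le]; constructor <;> linarith [hy.1, hy.2]
  have hcd0 : ∀ y, r ≤ y → y ≤ w - r → cutDeriv w δ y = 0 := by
    intro y hy1 hy2
    rw [cutDeriv, deriv_smoothTransition_eq_zero (Or.inr ?_), zero_mul]
    have : 2 * δ ≤ y * (w - y) := by nlinarith [mul_nonneg (sub_nonneg.2 hy1) (sub_nonneg.2 hy2)]
    have : 2 ≤ y * (w - y) / δ := by rw [le_div_iff₀ hδ]; exact this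
    linarith
  have hcont : Continuous (cutDeriv w δ) := by
    unfold cutDeriv
    exact (deriv_smoothTransition_continuous.comp (by fun_prop)).mul (by fun_prop)
  have hmeasR : MeasurableSet (Ioo (0 : ℝ) L ×ˢ Ioo (0 : ℝ) w) :=
    measurableSet_Ioo.prod measurableSet_Ioo
  have hE_int : IntegrableOn (fun z => E z * |cutDeriv w δ z.2|) (Ioo 0 L ×ˢ Ioo 0 w) := by
    refine Integrable.mul_bdd (c := C * (w / δ)) hE ?_ ?_
    · exact (by fun_prop : Continuous fun z : ℝ × ℝ => |cutDeriv w δ z.2|).aestronglyMeasurable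
    · filter_upwards [ae_restrict_mem hmeasR] with z hz
      rw [Real.norm_eq_abs, abs_abs]; exact hcd z.2 hz.2
  refine ⟨hE_int, ?_⟩
  have hfub : ∫ z in Ioo 0 L ×ˢ Ioo 0 w, E z * |cutDeriv w δ z.2|
      = ∫ y in Ioo 0 w, F y * |cutDeriv w δ y| := by
    rw [IntegrableOn, Measure.volume_eq_prod, ← Measure.prod_restrict] at hE_int
    rw [Measure.volume_eq_prod, ← Measure.prod_restrict, integral_prod_symm _ hE_int]
    refine integral_congr_ae (Eventually.of_forall fun y => ?_)
    simp only [hF]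
    rw [← integral_mul_const]
  rw [hfub]
  set M := ε' * (C * (w / δ)) with hM
  have hM0 : 0 ≤ M := by positivity
  set G : ℝ → ℝ := fun y => (Ioo 0 r).indicator (fun _ => M) y
    + (Ioo (w - r) w).indicator (fun _ => M) y with hG
  have iA : Integrable ((Ioo 0 r).indicator (fun _ => M) : ℝ → ℝ) :=
    (integrable_indicator_iff measurableSet_Ioo).2 (integrableOn_const (by simp))
  have iB : Integrable ((Ioo (w - r) w).indicator (fun _ => M) : ℝ → ℝ) :=
    (integrable_indicator_iff measurableSet_Ioo).2 (integrableOn_const (by simp))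
  have hGi : Integrable G := iA.add iB
  have hG0 : ∀ y, 0 ≤ G y := fun y =>
    add_nonneg (indicator_nonneg (fun _ _ => hM0) y) (indicator_nonneg (fun _ _ => hM0) y)
  have hle : ∀ y ∈ Ioo 0 w, F y * |cutDeriv w δ y| ≤ G y := by
    intro y hy
    by_cases hy1 : y < r
    · have hFy : F y < ε' := hF₀ ⟨hy.1, by linarith⟩
      have : F y * |cutDeriv w δ y| ≤ M :=
        mul_le_mul hFy.le (hcd y hy) (abs_nonneg _) hε'0.le
      have h2 : (Ioo 0 r).indicator (fun _ => M) y = M :=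
          indicator_of_mem (show y ∈ Ioo 0 r from ⟨hy.1, hy1⟩) _
      have h3 : 0 ≤ (Ioo (w - r) w).indicator (fun _ => M) y := indicator_nonneg (fun _ _ => hM0) y
      simp only [hG]; linarith
    · by_cases hy2 : w - r < y
      · have hFy : F y < ε' := hF₁ ⟨by linarith, hy.2⟩
        have : F y * |cutDeriv w δ y| ≤ M :=
          mul_le_mul hFy.le (hcd y hy) (abs_nonneg _) hε'0.le
        have h2 : (Ioo (w - r) w).indicator (fun _ => M) y = M :=
          indicator_of_mem (show y ∈ Ioo (w - r) w from ⟨hy2, hy.2⟩) _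
        have h3 : 0 ≤ (Ioo 0 r).indicator (fun _ => M) y := indicator_nonneg (fun _ _ => hM0) y
        simp only [hG]; linarith
      · rw [hcd0 y (not_lt.1 hy1) (not_lt.1 hy2), abs_zero, mul_zero]
        exact hG0 y
  have hIG : ∫ y, G y = 2 * r * M := by
    simp only [hG]
    rw [integral_add iA iB, integral_indicator measurableSet_Ioo,
      integral_indicator measurableSet_Ioo]
    simp [measureReal_def, hr0.le]
    ring
  calc ∫ y in Ioo 0 w, F y * |cutDeriv w δ y| ≤ ∫ y in Ioo 0 w, G y := by
        refine integral_mono_of_nonneg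
          (Eventually.of_forall fun y => mul_nonneg (hF0 y) (abs_nonneg _)) hGi.integrableOn ?_
        filter_upwards [ae_restrict_mem measurableSet_Ioo] with y hy using hle y hy
    _ ≤ ∫ y, G y := setIntegral_le_integral hGi (Eventually.of_forall hG0)
    _ = ε := by
        rw [hIG, hM, hε', hr]; field_simp; norm_num

/-! ### The weighted divergence identity for two translators -/

/-- The integral of a directional derivative of a `C¹` function supported in a compact subset of
an open set vanishes; only the values of `f` on `Ω` matter. -/
lemma integral_fderiv_eq_zero {Ω K : Set (ℝ × ℝ)} {f : ℝ × ℝ → ℝ} (hΩ : IsOpen Ω)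
    (hK : IsCompact K) (hf : ContDiffOn ℝ 1 f Ω) (h0 : ∀ q ∈ Ω, q ∉ K → f q = 0)
    (hKΩ : K ⊆ Ω) (v : ℝ × ℝ) :
    IntegrableOn (fun q => fderiv ℝ f q v) Ω ∧ ∫ q in Ω, fderiv ℝ f q v = 0 := by
  set g := Ω.indicator f with hg
  have hgK : ∀ q ∉ K, g q = 0 := by
    intro q hq
    by_cases hqΩ : q ∈ Ω
    · rw [hg, indicator_of_mem hqΩ, h0 q hqΩ hq]
    · rw [hg, indicator_of_notMem hqΩ]
  have hgΩ : ∀ q ∈ Ω, g =ᶠ[nhds q] f := fun q hq => by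
    filter_upwards [hΩ.mem_nhds hq] with z hz using indicator_of_mem hz _
  have hgc : ∀ q ∉ K, g =ᶠ[nhds q] fun _ => 0 := fun q hq => by
    filter_upwards [hK.isClosed.isOpen_compl.mem_nhds hq] with z hz using hgK z hz
  have hgC : ContDiff ℝ 1 g := by
    rw [contDiff_iff_contDiffAt]
    intro q
    by_cases hq : q ∈ Ω
    · exact (hf.contDiffAt (hΩ.mem_nhds hq)).congr_of_eventuallyEq (hgΩ q hq)
    · exact contDiffAt_const.congr_of_eventuallyEq (hgc q fun h => hq (hKΩ h))
  have hgs : HasCompactSupport g := HasCompactSupport.intro hK hgK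
  have hds : HasCompactSupport (fun q => fderiv ℝ g q v) := by
    refine HasCompactSupport.intro hK fun q hq => ?_
    rw [(hgc q hq).fderiv_eq]; simp
  have hdc : Continuous (fun q => fderiv ℝ g q v) :=
    (hgC.continuous_fderiv (by simp)).clm_apply continuous_const
  have hdi : Integrable (fun q => fderiv ℝ g q v) := hdc.integrable_of_hasCompactSupport hds
  have hind : (fun q => fderiv ℝ g q v) = Ω.indicator (fun q => fderiv ℝ f q v) := by
    ext q
    by_cases hq : q ∈ Ω
    · rw [indicator_of_mem hq, (hgΩ q hq).fderiv_eq]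
    · rw [indicator_of_notMem hq, (hgc q fun h => hq (hKΩ h)).fderiv_eq]; simp
  have hz : ∫ q, fderiv ℝ g q v = 0 := by
    have := integral_mul_fderiv_eq_neg_fderiv_mul_of_integrable (μ := (volume : Measure (ℝ × ℝ)))
      (f := fun _ : ℝ × ℝ => (1 : ℝ)) (g := g) (v := v) (by simp) (by simpa using hdi)
      (by simpa using hgC.continuous.integrable_of_hasCompactSupport hgs)
      (fun x _ => by fun_prop) (fun x _ => hgC.differentiable (by simp) x)
    simpa using this
  constructor
  · rw [hind] at hdi
    exact (integrable_indicator_iff hΩ.measurableSet).1 hdi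
  · rw [← integral_indicator hΩ.measurableSet, ← hind, hz]

lemma hasDerivAt_div_sqrt {n p q : ℝ → ℝ} {n' p' q' x : ℝ} (hn : HasDerivAt n n' x)
    (hp : HasDerivAt p p' x) (hq : HasDerivAt q q' x) :
    HasDerivAt (fun s => n s / √(1 + p s ^ 2 + q s ^ 2))
      (n' / √(1 + p x ^ 2 + q x ^ 2)
        - n x * (p x * p' + q x * q') / √(1 + p x ^ 2 + q x ^ 2) ^ 3) x := by
  have hpos : 0 < 1 + p x ^ 2 + q x ^ 2 := by positivity
  have hW := (((hp.fun_pow 2).const_add 1).fun_add (hq.fun_pow 2)).sqrt hpos.ne'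
  have hs : 0 < √(1 + p x ^ 2 + q x ^ 2) := sqrt_pos.2 hpos
  refine (hn.fun_div hW hs.ne').congr_deriv ?_
  field_simp
  ring

lemma hasDerivAt_flux {u₁ u₂ y p₁ q₁ p₂ q₂ n₁ n₂ : ℝ → ℝ}
    {u₁' u₂' y' p₁' q₁' p₂' q₂' n₁' n₂' x : ℝ} {t w δ : ℝ}
    (hu₁ : HasDerivAt u₁ u₁' x) (hu₂ : HasDerivAt u₂ u₂' x) (hy : HasDerivAt y y' x)
    (hp₁ : HasDerivAt p₁ p₁' x) (hq₁ : HasDerivAt q₁ q₁' x) (hn₁ : HasDerivAt n₁ n₁' x)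
    (hp₂ : HasDerivAt p₂ p₂' x) (hq₂ : HasDerivAt q₂ q₂' x) (hn₂ : HasDerivAt n₂ n₂' x) :
    HasDerivAt (fun s => smoothTransition (t + 1 - u₂ s)
        * smoothTransition (y s * (w - y s) / δ - 1) * exp (u₁ s)
        * (n₁ s / √(1 + p₁ s ^ 2 + q₁ s ^ 2) - n₂ s / √(1 + p₂ s ^ 2 + q₂ s ^ 2)))
      (exp (u₁ x) * (
        (-(deriv smoothTransition (t + 1 - u₂ x) * u₂')
            * smoothTransition (y x * (w - y x) / δ - 1)
          + smoothTransition (t + 1 - u₂ x) * (cutDeriv w δ (y x) * y')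
          + smoothTransition (t + 1 - u₂ x) * smoothTransition (y x * (w - y x) / δ - 1) * u₁')
          * (n₁ x / √(1 + p₁ x ^ 2 + q₁ x ^ 2) - n₂ x / √(1 + p₂ x ^ 2 + q₂ x ^ 2))
        + smoothTransition (t + 1 - u₂ x) * smoothTransition (y x * (w - y x) / δ - 1)
          * ((n₁' / √(1 + p₁ x ^ 2 + q₁ x ^ 2)
              - n₁ x * (p₁ x * p₁' + q₁ x * q₁') / √(1 + p₁ x ^ 2 + q₁ x ^ 2) ^ 3)
            - (n₂' / √(1 + p₂ x ^ 2 + q₂ x ^ 2)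
              - n₂ x * (p₂ x * p₂' + q₂ x * q₂') / √(1 + p₂ x ^ 2 + q₂ x ^ 2) ^ 3)))) x := by
  have hst : ∀ z, HasDerivAt smoothTransition (deriv smoothTransition z) z := fun z =>
    ((smoothTransition.contDiff (n := 1)).differentiable (by simp) z).hasDerivAt
  have hT := (hst (t + 1 - u₂ x)).comp x (hu₂.const_sub (t + 1))
  have hZ := (hst (y x * (w - y x) / δ - 1)).comp x
    (((hy.fun_mul (hy.const_sub w)).div_const δ).sub_const 1)
  have hX := (hasDerivAt_div_sqrt hn₁ hp₁ hq₁).fun_sub (hasDerivAt_div_sqrt hn₂ hp₂ hq₂)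
  refine (((hT.mul hZ).mul hu₁.exp).mul hX).congr_deriv ?_
  simp only [Function.comp, Pi.mul_apply, cutDeriv]
  ring

/-- The algebra behind the weighted divergence identity. Here `(pᵢ, qᵢ)` are the gradients,
`rᵢ, sᵢ, tᵢ` the second derivatives, `T, Z, Z'` the values of the cutoffs and `T'` minus the
derivative of the first one. -/
lemma flux_algebra {p₁ q₁ r₁ s₁ t₁ p₂ q₂ r₂ s₂ t₂ W₁ W₂ T T' Z Z' : ℝ}
    (hW₁ : 0 < W₁) (hW₂ : 0 < W₂) (e₁ : W₁ ^ 2 = 1 + p₁ ^ 2 + q₁ ^ 2)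
    (e₂ : W₂ ^ 2 = 1 + p₂ ^ 2 + q₂ ^ 2)
    (h₁ : (1 + q₁ ^ 2) * r₁ - 2 * p₁ * q₁ * s₁ + (1 + p₁ ^ 2) * t₁ = 1 + p₁ ^ 2 + q₁ ^ 2)
    (h₂ : (1 + q₂ ^ 2) * r₂ - 2 * p₂ * q₂ * s₂ + (1 + p₂ ^ 2) * t₂ = 1 + p₂ ^ 2 + q₂ ^ 2)
    (hT0 : 0 ≤ T) (hT1 : T ≤ 1) (hT' : 0 ≤ T') (hZ0 : 0 ≤ Z) (hZ1 : Z ≤ 1) :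
    T * Z * (W₁ - (1 + p₁ * p₂ + q₁ * q₂) / W₂) ≤
      (((-(T' * p₂) * Z + T * (Z' * 0) + T * Z * p₁) * (p₁ / W₁ - p₂ / W₂)
        + T * Z * ((r₁ / W₁ - p₁ * (p₁ * r₁ + q₁ * s₁) / W₁ ^ 3)
          - (r₂ / W₂ - p₂ * (p₂ * r₂ + q₂ * s₂) / W₂ ^ 3)))
      + ((-(T' * q₂) * Z + T * (Z' * 1) + T * Z * q₁) * (q₁ / W₁ - q₂ / W₂)
        + T * Z * ((t₁ / W₁ - q₁ * (p₁ * s₁ + q₁ * t₁) / W₁ ^ 3)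
          - (t₂ / W₂ - q₂ * (p₂ * s₂ + q₂ * t₂) / W₂ ^ 3))))
      + (T' + 2 * |Z'|) := by
  have div_eq : ∀ {p q r s t W : ℝ}, 0 < W → W ^ 2 = 1 + p ^ 2 + q ^ 2 →
      (1 + q ^ 2) * r - 2 * p * q * s + (1 + p ^ 2) * t = 1 + p ^ 2 + q ^ 2 →
      (r / W - p * (p * r + q * s) / W ^ 3) + (t / W - q * (p * s + q * t) / W ^ 3) = 1 / W := by
    intro p q r s t W hW e h
    field_simp
    rw [e]
    linear_combination h
  have d₁ := div_eq hW₁ e₁ h₁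
  have d₂ := div_eq hW₂ e₂ h₂
  have hle : ∀ {q p W : ℝ}, 0 < W → W ^ 2 = 1 + p ^ 2 + q ^ 2 → |q / W| ≤ 1 := by
    intro q p W hW e
    rw [abs_div, abs_of_pos hW, div_le_one hW]
    exact abs_le_of_sq_le_sq (by nlinarith) hW.le
  have hQ : (p₂ * (p₁ / W₁ - p₂ / W₂) + q₂ * (q₁ / W₁ - q₂ / W₂)) ≤ 1 := by
    -- Cauchy–Schwarz: `⟨Du₂, X₁⟩ ≤ W₂ = (1 + |Du₂|²) / W₂`.
    have hcs : (p₂ * p₁ + q₂ * q₁) / W₁ ≤ W₂ := by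
      rw [div_le_iff₀ hW₁]
      refine le_of_sq_le_sq ?_ (by positivity)
      rw [mul_pow, e₁, e₂]
      nlinarith [sq_nonneg (p₁ * q₂ - p₂ * q₁), sq_nonneg p₁, sq_nonneg p₂, sq_nonneg q₁,
        sq_nonneg q₂]
    have h1 : 1 / W₂ ≤ 1 := by
      rw [div_le_one hW₂]; nlinarith [sq_nonneg p₂, sq_nonneg q₂]
    have h2 : (p₂ ^ 2 + q₂ ^ 2) / W₂ = W₂ - 1 / W₂ := by
      field_simp; linarith
    calc _ = (p₂ * p₁ + q₂ * q₁) / W₁ - (p₂ ^ 2 + q₂ ^ 2) / W₂ := by ring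
      _ ≤ 1 := by rw [h2]; linarith
  have hY : -(T * Z' * (q₁ / W₁ - q₂ / W₂)) ≤ 2 * |Z'| := by
    have a : |q₁ / W₁ - q₂ / W₂| ≤ 2 := by
      have := abs_sub (q₁ / W₁) (q₂ / W₂)
      linarith [hle hW₁ e₁, hle hW₂ e₂]
    calc _ ≤ |T * Z' * (q₁ / W₁ - q₂ / W₂)| := neg_le_abs _
      _ = T * |Z'| * |q₁ / W₁ - q₂ / W₂| := by rw [abs_mul, abs_mul, abs_of_nonneg hT0]
      _ ≤ 1 * |Z'| * 2 := by gcongr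
      _ = _ := by ring
  have hTQ : T' * Z * (p₂ * (p₁ / W₁ - p₂ / W₂) + q₂ * (q₁ / W₁ - q₂ / W₂)) ≤ T' := by
    calc _ ≤ T' * Z * 1 := by gcongr
      _ ≤ T' * 1 * 1 := by gcongr
      _ = T' := by ring
  have hD : W₁ - (1 + p₁ * p₂ + q₁ * q₂) / W₂ =
      p₁ * (p₁ / W₁ - p₂ / W₂) + q₁ * (q₁ / W₁ - q₂ / W₂) + (1 / W₁ - 1 / W₂) := by
    have : W₁ = (1 + p₁ ^ 2 + q₁ ^ 2) / W₁ := by field_simp; linarith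
    nth_rewrite 1 [this]
    ring
  rw [hD, ← d₁, ← d₂]
  linarith

lemma pdx_pdy_comm {u : ℝ × ℝ → ℝ} {p : ℝ × ℝ} (hu : ContDiffAt ℝ 2 u p) :
    pdx (pdy u) p = pdy (pdx u) p := by
  have hd : DifferentiableAt ℝ (fderiv ℝ u) p :=
    (hu.fderiv_right (m := 1) (by norm_num)).differentiableAt (by simp)
  have hpd : ∀ v w : ℝ × ℝ, fderiv ℝ (fun q => fderiv ℝ u q v) p w
      = fderiv ℝ (fderiv ℝ u) p w v := by
    intro v w
    have h : HasFDerivAt (fun q => fderiv ℝ u q v)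
        ((ContinuousLinearMap.apply ℝ ℝ v).comp (fderiv ℝ (fderiv ℝ u) p)) p :=
      (ContinuousLinearMap.apply ℝ ℝ v).hasFDerivAt.comp p hd.hasFDerivAt
    rw [h.fderiv]; rfl
  have hsymm : IsSymmSndFDerivAt ℝ u p := hu.isSymmSndFDerivAt (by simp)
  change fderiv ℝ (fun q => fderiv ℝ u q (0, 1)) p (1, 0)
    = fderiv ℝ (fun q => fderiv ℝ u q (1, 0)) p (0, 1)
  rw [hpd, hpd, hsymm.eq]

/-- The component along `v` of the vector field `χ e^{u₁} (Du₁/W₁ - Du₂/W₂)`, where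
`Wᵢ = √(1 + |Duᵢ|²)` and the cutoff `χ` vanishes where `u₂ ≥ t + 1` or `y (w - y) ≤ δ`. -/
def flux (u₁ u₂ : ℝ × ℝ → ℝ) (t w δ : ℝ) (v q : ℝ × ℝ) : ℝ :=
  smoothTransition (t + 1 - u₂ q) * smoothTransition (q.2 * (w - q.2) / δ - 1) * exp (u₁ q)
    * (fderiv ℝ u₁ q v / √(1 + pdx u₁ q ^ 2 + pdy u₁ q ^ 2)
      - fderiv ℝ u₂ q v / √(1 + pdx u₂ q ^ 2 + pdy u₂ q ^ 2))

/-- `W₁ - (1 + ⟨Du₁, Du₂⟩) / W₂`, the density of `div (e^{u₁} (Du₁/W₁ - Du₂/W₂))` with respect to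
`e^{u₁}` when `u₁`, `u₂` are translators. It is nonnegative, and zero only where `Du₁ = Du₂`. -/
def excess (u₁ u₂ : ℝ × ℝ → ℝ) (q : ℝ × ℝ) : ℝ :=
  √(1 + pdx u₁ q ^ 2 + pdy u₁ q ^ 2)
    - (1 + pdx u₁ q * pdx u₂ q + pdy u₁ q * pdy u₂ q) / √(1 + pdx u₂ q ^ 2 + pdy u₂ q ^ 2)

lemma excess_eq (u₁ u₂ : ℝ × ℝ → ℝ) (q : ℝ × ℝ) :
    0 ≤ excess u₁ u₂ q ∧
      (excess u₁ u₂ q = 0 → pdx u₁ q = pdx u₂ q ∧ pdy u₁ q = pdy u₂ q) := by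
  unfold excess
  set p₁ := pdx u₁ q
  set q₁ := pdy u₁ q
  set p₂ := pdx u₂ q
  set q₂ := pdy u₂ q
  have hW₁ : 0 < √(1 + p₁ ^ 2 + q₁ ^ 2) := sqrt_pos.2 (by positivity)
  have hW₂ : 0 < √(1 + p₂ ^ 2 + q₂ ^ 2) := sqrt_pos.2 (by positivity)
  have e₁ : √(1 + p₁ ^ 2 + q₁ ^ 2) ^ 2 = 1 + p₁ ^ 2 + q₁ ^ 2 := sq_sqrt (by positivity)
  have e₂ : √(1 + p₂ ^ 2 + q₂ ^ 2) ^ 2 = 1 + p₂ ^ 2 + q₂ ^ 2 := sq_sqrt (by positivity)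
  set W₁ := √(1 + p₁ ^ 2 + q₁ ^ 2)
  set W₂ := √(1 + p₂ ^ 2 + q₂ ^ 2)
  -- Lagrange's identity for the vectors `(1, p₁, q₁)` and `(1, p₂, q₂)`
  have key : (W₁ * W₂) ^ 2 = (1 + p₁ * p₂ + q₁ * q₂) ^ 2
      + ((p₁ - p₂) ^ 2 + (q₁ - q₂) ^ 2 + (p₁ * q₂ - p₂ * q₁) ^ 2) := by
    rw [mul_pow, e₁, e₂]; ring
  constructor
  · rw [sub_nonneg, div_le_iff₀ hW₂]
    refine abs_le_of_sq_le_sq' ?_ (by positivity) |>.2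
    rw [key]
    linarith [sq_nonneg (p₁ - p₂), sq_nonneg (q₁ - q₂), sq_nonneg (p₁ * q₂ - p₂ * q₁)]
  · intro h
    have h' : W₁ * W₂ = 1 + p₁ * p₂ + q₁ * q₂ := by
      rw [sub_eq_zero, eq_div_iff hW₂.ne'] at h; exact h
    rw [h'] at key
    constructor
    · have : (p₁ - p₂) ^ 2 = 0 := by
        nlinarith [sq_nonneg (p₁ - p₂), sq_nonneg (q₁ - q₂), sq_nonneg (p₁ * q₂ - p₂ * q₁)]
      exact sub_eq_zero.1 (pow_eq_zero_iff (two_ne_zero) |>.1 this)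
    · have : (q₁ - q₂) ^ 2 = 0 := by
        nlinarith [sq_nonneg (p₁ - p₂), sq_nonneg (q₁ - q₂), sq_nonneg (p₁ * q₂ - p₂ * q₁)]
      exact sub_eq_zero.1 (pow_eq_zero_iff (two_ne_zero) |>.1 this)

lemma contDiffAt_pd {u : ℝ × ℝ → ℝ} {q : ℝ × ℝ} (hu : ContDiffAt ℝ 2 u q) (v : ℝ × ℝ) :
    ContDiffAt ℝ 1 (fun z => fderiv ℝ u z v) q :=
  (hu.fderiv_right (m := 1) (by norm_num)).clm_apply contDiffAt_const

lemma contDiffAt_W {u : ℝ × ℝ → ℝ} {q : ℝ × ℝ} (hu : ContDiffAt ℝ 2 u q) :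
    ContDiffAt ℝ 1 (fun z => √(1 + pdx u z ^ 2 + pdy u z ^ 2)) q :=
  ContDiffAt.sqrt ((contDiffAt_const.add ((contDiffAt_pd hu (1, 0)).pow 2)).add
    ((contDiffAt_pd hu (0, 1)).pow 2)) (by positivity)

lemma flux_contDiffAt {u₁ u₂ : ℝ × ℝ → ℝ} {q : ℝ × ℝ} (h₁ : ContDiffAt ℝ 2 u₁ q)
    (h₂ : ContDiffAt ℝ 2 u₂ q) (t w δ : ℝ) (v : ℝ × ℝ) :
    ContDiffAt ℝ 1 (flux u₁ u₂ t w δ v) q := by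
  have a₁ : ContDiffAt ℝ 1 u₁ q := h₁.of_le (by norm_num)
  have a₂ : ContDiffAt ℝ 1 u₂ q := h₂.of_le (by norm_num)
  have b : ContDiff ℝ 1 (fun q : ℝ × ℝ => q.2 * (w - q.2) / δ - 1) := by fun_prop
  have hX : ∀ {u : ℝ × ℝ → ℝ}, ContDiffAt ℝ 2 u q →
      ContDiffAt ℝ 1 (fun z => fderiv ℝ u z v / √(1 + pdx u z ^ 2 + pdy u z ^ 2)) q :=
    fun hu => (contDiffAt_pd hu v).div (contDiffAt_W hu)
      (sqrt_pos.2 (by positivity)).ne'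
  exact ((((smoothTransition.contDiff (n := 1)).contDiffAt.comp q (contDiffAt_const.sub a₂)).mul
    ((smoothTransition.contDiff (n := 1)).comp b).contDiffAt).mul a₁.exp).mul
    ((hX h₁).sub (hX h₂))

/-- The divergence of the cut off field controls the cut off excess up to errors supported where the
cutoffs vary. -/
lemma flux_pointwise {u₁ u₂ : ℝ × ℝ → ℝ} {q : ℝ × ℝ} (h₁ : ContDiffAt ℝ 2 u₁ q)
    (h₂ : ContDiffAt ℝ 2 u₂ q)
    (pde₁ : (1 + (pdy u₁ q) ^ 2) * pdx (pdx u₁) q - 2 * pdx u₁ q * pdy u₁ q * pdy (pdx u₁) q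
      + (1 + (pdx u₁ q) ^ 2) * pdy (pdy u₁) q = 1 + (pdx u₁ q) ^ 2 + (pdy u₁ q) ^ 2)
    (pde₂ : (1 + (pdy u₂ q) ^ 2) * pdx (pdx u₂) q - 2 * pdx u₂ q * pdy u₂ q * pdy (pdx u₂) q
      + (1 + (pdx u₂ q) ^ 2) * pdy (pdy u₂) q = 1 + (pdx u₂ q) ^ 2 + (pdy u₂ q) ^ 2)
    (t w δ : ℝ) :
    smoothTransition (t + 1 - u₂ q) * smoothTransition (q.2 * (w - q.2) / δ - 1)
        * (exp (u₁ q) * excess u₁ u₂ q)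
      ≤ (fderiv ℝ (flux u₁ u₂ t w δ (1, 0)) q (1, 0) + fderiv ℝ (flux u₁ u₂ t w δ (0, 1)) q (0, 1))
        + exp (u₁ q) * (deriv smoothTransition (t + 1 - u₂ q) + 2 * |cutDeriv w δ q.2|) := by
  have hline : ∀ v : ℝ × ℝ, HasDerivAt (fun s : ℝ => q + s • v) v 0 := by
    intro v
    simpa using ((hasDerivAt_id (0 : ℝ)).smul_const v).const_add q
  have hcomp : ∀ {f : ℝ × ℝ → ℝ} (v : ℝ × ℝ), ContDiffAt ℝ 1 f q →
      HasDerivAt (fun s : ℝ => f (q + s • v)) (fderiv ℝ f q v) 0 := by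
    intro f v hf
    have : HasFDerivAt f (fderiv ℝ f q) (q + (0 : ℝ) • v) := by
      simpa using (hf.differentiableAt (by simp)).hasFDerivAt
    exact this.comp_hasDerivAt 0 (hline v)
  have a₁ : ContDiffAt ℝ 1 u₁ q := h₁.of_le (by norm_num)
  have a₂ : ContDiffAt ℝ 1 u₂ q := h₂.of_le (by norm_num)
  have hflux : ∀ v e : ℝ × ℝ, _ := fun v e =>
    (hcomp v (flux_contDiffAt h₁ h₂ t w δ e)).unique
      (hasDerivAt_flux (t := t) (w := w) (δ := δ) (hcomp v a₁) (hcomp v a₂)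
      (hcomp v (f := Prod.snd) contDiffAt_snd)
      (hcomp v (contDiffAt_pd h₁ (1, 0))) (hcomp v (contDiffAt_pd h₁ (0, 1)))
      (hcomp v (contDiffAt_pd h₁ e)) (hcomp v (contDiffAt_pd h₂ (1, 0)))
      (hcomp v (contDiffAt_pd h₂ (0, 1))) (hcomp v (contDiffAt_pd h₂ e)))
  have hx := hflux (1, 0) (1, 0)
  have hy := hflux (0, 1) (0, 1)
  have alg := flux_algebra (Z' := cutDeriv w δ q.2)
    (sqrt_pos.2 (show 0 < 1 + pdx u₁ q ^ 2 + pdy u₁ q ^ 2 by positivity))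
    (sqrt_pos.2 (show 0 < 1 + pdx u₂ q ^ 2 + pdy u₂ q ^ 2 by positivity))
    (sq_sqrt (by positivity)) (sq_sqrt (by positivity)) pde₁ pde₂
    (smoothTransition.nonneg (t + 1 - u₂ q)) (smoothTransition.le_one _)
    (deriv_smoothTransition_nonneg (t + 1 - u₂ q))
    (smoothTransition.nonneg (q.2 * (w - q.2) / δ - 1)) (smoothTransition.le_one _)
  have c₁ : fderiv ℝ (pdy u₁) q (1, 0) = fderiv ℝ (pdx u₁) q (0, 1) := pdx_pdy_comm h₁
  have c₂ : fderiv ℝ (pdy u₂) q (1, 0) = fderiv ℝ (pdx u₂) q (0, 1) := pdx_pdy_comm h₂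
  have ex : ∀ u : ℝ × ℝ → ℝ, (fun z => fderiv ℝ u z (1, 0)) = pdx u := fun _ => rfl
  have ey : ∀ u : ℝ × ℝ → ℝ, (fun z => fderiv ℝ u z (0, 1)) = pdy u := fun _ => rfl
  simp only [zero_smul, add_zero, fderiv_snd, ContinuousLinearMap.coe_snd', ex, ey, c₁, c₂]
    at hx hy
  rw [hx, hy]
  have := mul_le_mul_of_nonneg_left alg (exp_pos (u₁ q)).le
  unfold excess
  simp only [pdx, pdy] at this ⊢
  linarith

/-! ### Vanishing of the excess -/

/-- The support of the cutoff is compact in the parallelogram because `u` tends to `+∞` at the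
nonhorizontal sides. -/
lemma isCompact_cutoff {α w₁ w₂ L : ℝ} {u : ℝ × ℝ → ℝ} (h : ScherkBVP α w₂ L u) (hw : w₁ ≤ w₂)
    {δ : ℝ} (hδ : 0 < δ) (t : ℝ) :
    IsCompact {q | q ∈ Pgram α w₁ L ∧ δ ≤ q.2 * (w₁ - q.2) ∧ u q ≤ t} := by
  obtain ⟨hu, -, -, hl, hr⟩ := h
  set K := {q | q ∈ Pgram α w₁ L ∧ δ ≤ q.2 * (w₁ - q.2) ∧ u q ≤ t} with hK
  have hKb : K ⊆ shear α '' (Icc 0 L ×ˢ Icc 0 w₁) := by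
    intro q hq
    have : Pgram α w₁ L = shear α '' (Ioo 0 L ×ˢ Ioo 0 w₁) := by
      rw [← shear_preimage, image_preimage_eq _ (shear α).surjective]
    have hq1 := hq.1
    rw [this] at hq1
    exact image_mono (Set.prod_mono Ioo_subset_Icc_self Ioo_subset_Icc_self) hq1
  have hcomp : IsCompact (shear α '' (Icc 0 L ×ˢ Icc 0 w₁)) :=
    (isCompact_Icc.prod isCompact_Icc).image (shear α).continuous
  refine hcomp.of_isClosed_subset ?_ hKb
  have hsub : Pgram α w₁ L ⊆ Pgram α w₂ L := pgram_mono hw le_rfl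
  rw [← closure_subset_iff_isClosed]
  intro z hz
  have hcl : ∀ {C : Set (ℝ × ℝ)}, IsClosed C → K ⊆ C → z ∈ C := fun hC hKC =>
    closure_minimal hKC hC hz
  have z1 : δ ≤ z.2 * (w₁ - z.2) :=
    hcl (C := {q | δ ≤ q.2 * (w₁ - q.2)}) (isClosed_le (by fun_prop) (by fun_prop))
      fun q hq => hq.2.1
  have z2 : 0 ≤ z.2 :=
    hcl (C := {q | 0 ≤ q.2}) (isClosed_le (by fun_prop) (by fun_prop)) fun q hq => hq.1.1.le
  have z3 : z.2 * cos α / sin α ≤ z.1 :=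
    hcl (C := {q | q.2 * cos α / sin α ≤ q.1}) (isClosed_le (by fun_prop) (by fun_prop))
      fun q hq => hq.1.2.2.1.le
  have z4 : z.1 ≤ L + z.2 * cos α / sin α :=
    hcl (C := {q | q.1 ≤ L + q.2 * cos α / sin α}) (isClosed_le (by fun_prop) (by fun_prop))
      fun q hq => hq.1.2.2.2.le
  have y0 : 0 < z.2 := lt_of_le_of_ne z2 fun h => by rw [← h] at z1; linarith
  have y1 : z.2 < w₁ := by
    by_contra hcon
    push Not at hcon
    nlinarith
  have hfreq : ∃ᶠ q in nhdsWithin z (Pgram α w₂ L), u q ≤ t := by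
    rw [frequently_nhdsWithin_iff]
    rw [mem_closure_iff_frequently] at hz
    exact hz.mono fun q hq => ⟨hq.2.2, hsub hq.1⟩
  have hno : ¬ Tendsto u (nhdsWithin z (Pgram α w₂ L)) atTop := fun ht =>
    hfreq ((ht.eventually_gt_atTop t).mono fun q hq => not_le.2 hq)
  have z3' : z.2 * cos α / sin α < z.1 := by
    refine lt_of_le_of_ne z3 fun he => hno ?_
    have := hl z.2 y0 (y1.trans_le hw)
    rwa [he] at this
  have z4' : z.1 < L + z.2 * cos α / sin α := by
    refine lt_of_le_of_ne z4 fun he => hno ?_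
    have := hr z.2 y0 (y1.trans_le hw)
    rwa [← he] at this
  have hzΩ : z ∈ Pgram α w₁ L := ⟨y0, y1, z3', z4'⟩
  refine ⟨hzΩ, z1, ?_⟩
  have hc : Tendsto u (nhdsWithin z (Pgram α w₂ L)) (nhds (u z)) := hu.1.continuousOn z (hsub hzΩ)
  by_contra hcon
  push Not at hcon
  exact hfreq ((hc.eventually_const_lt hcon).mono fun q hq => not_le.2 hq)

lemma contDiffAt_two {Ω : Set (ℝ × ℝ)} {u : ℝ × ℝ → ℝ} {q : ℝ × ℝ} (hΩ : IsOpen Ω)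
    (hu : IsTranslatorOn Ω u) (hq : q ∈ Ω) : ContDiffAt ℝ 2 u q :=
  (hu.1.contDiffAt (hΩ.mem_nhds hq)).of_le (WithTop.coe_le_coe.2 (le_top : (2 : ℕ∞) ≤ ⊤))

lemma excess_continuousAt {u₁ u₂ : ℝ × ℝ → ℝ} {q : ℝ × ℝ} (h₁ : ContDiffAt ℝ 2 u₁ q)
    (h₂ : ContDiffAt ℝ 2 u₂ q) : ContinuousAt (excess u₁ u₂) q := by
  have a := fun v => (contDiffAt_pd h₁ v).continuousAt
  have b := fun v => (contDiffAt_pd h₂ v).continuousAt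
  exact (contDiffAt_W h₁).continuousAt.sub
    (((continuousAt_const.add ((a (1, 0)).mul (b (1, 0)))).add ((a (0, 1)).mul (b (0, 1)))).div
      (contDiffAt_W h₂).continuousAt (sqrt_pos.2 (by positivity)).ne')

/-- The flux through the cutoff region gives, for any set `B` where the weighted excess is at least
`κ` and the cutoff equals `1`, a bound of `κ |B|` by the two cutoff errors. -/
lemma flux_estimate {α w₁ w₂ L₁ L₂ : ℝ} {u₁ u₂ : ℝ × ℝ → ℝ} (h₁ : ScherkBVP α w₁ L₁ u₁)
    (h₂ : ScherkBVP α w₂ L₂ u₂) (hw : w₁ ≤ w₂) (hL : L₂ ≤ L₁) {t δ κ : ℝ} (hδ : 0 < δ)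
    {B : Set (ℝ × ℝ)} (hBm : MeasurableSet B) (hB : B ⊆ Pgram α w₁ L₂)
    (hBf : volume B ≠ ⊤)
    (hκ : ∀ q ∈ B, κ ≤ exp (u₁ q) * excess u₁ u₂ q) (hBt : ∀ q ∈ B, u₂ q ≤ t)
    (hBδ : ∀ q ∈ B, 2 * δ ≤ q.2 * (w₁ - q.2))
    (hi : IntegrableOn (fun q => exp (u₁ q) * deriv smoothTransition (t + 1 - u₂ q))
      (Pgram α w₁ L₂))
    (hj : IntegrableOn (fun q => exp (u₁ q) * |cutDeriv w₁ δ q.2|) (Pgram α w₁ L₂)) :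
    κ * volume.real B ≤
      (∫ q in Pgram α w₁ L₂, exp (u₁ q) * deriv smoothTransition (t + 1 - u₂ q))
      + 2 * ∫ q in Pgram α w₁ L₂, exp (u₁ q) * |cutDeriv w₁ δ q.2| := by
  set Ω := Pgram α w₁ L₂ with hΩ
  have hopen : IsOpen Ω := pgram_isOpen _ _ _
  have s₁ : Ω ⊆ Pgram α w₁ L₁ := pgram_mono le_rfl hL
  have s₂ : Ω ⊆ Pgram α w₂ L₂ := pgram_mono hw le_rfl
  have c₁ : ∀ q ∈ Ω, ContDiffAt ℝ 2 u₁ q := fun q hq =>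
    contDiffAt_two (pgram_isOpen _ _ _) h₁.1 (s₁ hq)
  have c₂ : ∀ q ∈ Ω, ContDiffAt ℝ 2 u₂ q := fun q hq =>
    contDiffAt_two (pgram_isOpen _ _ _) h₂.1 (s₂ hq)
  have hK := isCompact_cutoff h₂ hw hδ (t + 1)
  set K := {q | q ∈ Ω ∧ δ ≤ q.2 * (w₁ - q.2) ∧ u₂ q ≤ t + 1} with hKd
  have hdiv := fun v : ℝ × ℝ => integral_fderiv_eq_zero (f := flux u₁ u₂ t w₁ δ v) hopen hK
    (fun q hq => (flux_contDiffAt (c₁ q hq) (c₂ q hq) t w₁ δ v).contDiffWithinAt)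
    (fun q hq hqK => by
      by_cases hq1 : δ ≤ q.2 * (w₁ - q.2)
      · have : t + 1 < u₂ q := not_le.1 fun hq2 => hqK ⟨hq, hq1, hq2⟩
        rw [flux, smoothTransition.zero_of_nonpos (by linarith)]; ring
      · have : q.2 * (w₁ - q.2) / δ - 1 ≤ 0 := by
          rw [sub_nonpos, div_le_one hδ]; exact (not_le.1 hq1).le
        rw [flux, smoothTransition.zero_of_nonpos this]; ring)
    (fun q hq => hq.1) v
  obtain ⟨ix, zx⟩ := hdiv (1, 0)
  obtain ⟨iy, zy⟩ := hdiv (0, 1)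
  have hsum : IntegrableOn (fun q => (fderiv ℝ (flux u₁ u₂ t w₁ δ (1, 0)) q (1, 0)
      + fderiv ℝ (flux u₁ u₂ t w₁ δ (0, 1)) q (0, 1))
      + (exp (u₁ q) * deriv smoothTransition (t + 1 - u₂ q)
        + 2 * (exp (u₁ q) * |cutDeriv w₁ δ q.2|))) Ω :=
    (ix.add iy).add (hi.add (hj.const_mul 2))
  have hle : ∀ q ∈ Ω, B.indicator (fun _ => κ) q ≤
      (fderiv ℝ (flux u₁ u₂ t w₁ δ (1, 0)) q (1, 0)
      + fderiv ℝ (flux u₁ u₂ t w₁ δ (0, 1)) q (0, 1))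
      + (exp (u₁ q) * deriv smoothTransition (t + 1 - u₂ q)
        + 2 * (exp (u₁ q) * |cutDeriv w₁ δ q.2|)) := by
    intro q hq
    have hp := flux_pointwise (c₁ q hq) (c₂ q hq) (h₁.1.2 q (s₁ hq)) (h₂.1.2 q (s₂ hq)) t w₁ δ
    refine le_trans ?_ (hp.trans (le_of_eq (by ring)))
    by_cases hqB : q ∈ B
    · rw [indicator_of_mem hqB, smoothTransition.one_of_one_le (by linarith [hBt q hqB]),
        smoothTransition.one_of_one_le, one_mul, one_mul]
      · exact hκ q hqB
      · have : 2 ≤ q.2 * (w₁ - q.2) / δ := by rw [le_div_iff₀ hδ]; exact hBδ q hqB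
        linarith
    · rw [indicator_of_notMem hqB]
      exact mul_nonneg (mul_nonneg (smoothTransition.nonneg _) (smoothTransition.nonneg _))
        (mul_nonneg (exp_pos _).le (excess_eq _ _ _).1)
  have hBi : IntegrableOn (B.indicator (fun _ => κ)) Ω :=
    ((integrable_indicator_iff hBm).2 (integrableOn_const hBf)).integrableOn
  have hmono := setIntegral_mono_on hBi hsum hopen.measurableSet hle
  have e1 : ∫ q in Ω, B.indicator (fun _ => κ) q = κ * volume.real B := by
    rw [setIntegral_indicator hBm, inter_eq_self_of_subset_right hB]
    simp [mul_comm]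
  rw [e1, integral_add (Integrable.fun_add ix iy) (Integrable.fun_add hi (hj.const_mul 2)), integral_add ix iy, zx, zy,
    integral_add hi (hj.const_mul 2), integral_const_mul] at hmono
  linarith

/-- A ball where the excess is positive contradicts `flux_estimate`: the error of the vertical cutoff
is small for small `δ` by `cutoff_tail`, and for fixed `δ` the other error tends to zero as `t → ∞`
because `exp u₁` is integrable. -/
lemma excess_eq_zero {α w₁ w₂ L₁ L₂ : ℝ} {u₁ u₂ : ℝ × ℝ → ℝ} (hα : α ∈ Ioo 0 π) (hw₁ : 0 < w₁)
    (hL₁ : 0 < L₁) (h₁ : ScherkBVP α w₁ L₁ u₁)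
    (h₂ : ScherkBVP α w₂ L₂ u₂) (hw : w₁ ≤ w₂) (hL : L₂ ≤ L₁) {q₀ : ℝ × ℝ}
    (hq₀ : q₀ ∈ Pgram α w₁ L₂) : excess u₁ u₂ q₀ = 0 := by
  obtain ⟨hEi, hE0, hE1⟩ := slices_tendsto hα hw₁ hL₁ h₁ hL
  set Ω := Pgram α w₁ L₂ with hΩ
  have hopen : IsOpen Ω := pgram_isOpen _ _ _
  have s₁ : Ω ⊆ Pgram α w₁ L₁ := pgram_mono le_rfl hL
  have s₂ : Ω ⊆ Pgram α w₂ L₂ := pgram_mono hw le_rfl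
  have hmp := shear_measurePreserving α
  have hme := (shear α).measurableEmbedding
  have hpre : shear α ⁻¹' Ω = Ioo 0 L₂ ×ˢ Ioo 0 w₁ := shear_preimage α w₁ L₂
  have hE : IntegrableOn (fun q => exp (u₁ q)) Ω := by
    rw [← hmp.integrableOn_comp_preimage hme, hpre]; exact hEi
  have c₁ := contDiffAt_two (pgram_isOpen _ _ _) h₁.1 (s₁ hq₀)
  have c₂ := contDiffAt_two (pgram_isOpen _ _ _) h₂.1 (s₂ hq₀)
  by_contra hne
  have hpos : 0 < excess u₁ u₂ q₀ := lt_of_le_of_ne (excess_eq _ _ _).1 (Ne.symm hne)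
  have hG : ContinuousAt (fun q => exp (u₁ q) * excess u₁ u₂ q) q₀ :=
    c₁.continuousAt.rexp.mul (excess_continuousAt c₁ c₂)
  set κ := exp (u₁ q₀) * excess u₁ u₂ q₀ / 2 with hκ
  have hκ0 : 0 < κ := by positivity
  set c := q₀.2 * (w₁ - q₀.2) / 2 with hc
  have hc0 : 0 < c := by
    have := mul_pos hq₀.1 (sub_pos.2 hq₀.2.1)
    positivity
  have ev1 : ∀ᶠ q in nhds q₀, κ < exp (u₁ q) * excess u₁ u₂ q :=
    hG.eventually_const_lt (by
      have : 0 < exp (u₁ q₀) * excess u₁ u₂ q₀ := by positivity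
      simp only [hκ]; linarith)
  have ev2 : ∀ᶠ q in nhds q₀, u₂ q < u₂ q₀ + 1 := c₂.continuousAt.eventually_lt_const (by linarith)
  have ev3 : ∀ᶠ q in nhds q₀, c < q.2 * (w₁ - q.2) := by
    have : Continuous fun q : ℝ × ℝ => q.2 * (w₁ - q.2) := by fun_prop
    exact this.continuousAt.eventually_const_lt (by simp only [hc] at hc0 ⊢; linarith)
  obtain ⟨r, hr, hB⟩ := Metric.eventually_nhds_iff_ball.1
    (((hopen.eventually_mem hq₀).and ev1).and (ev2.and ev3))
  set B := Metric.ball q₀ r with hBd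
  have hBf : volume B ≠ ⊤ := measure_ball_lt_top.ne
  have hm : 0 < volume.real B := ENNReal.toReal_pos (Metric.measure_ball_pos volume q₀ hr).ne' hBf
  set ε := κ * volume.real B / 4 with hε
  have hε0 : 0 < ε := by positivity
  obtain ⟨δ₀, hδ₀, hδ⟩ := cutoff_tail hw₁ (E := fun z => exp (u₁ (shear α z)))
    (fun z => (exp_pos _).le) hEi hE0 hE1 hε0
  have hδ1 : 0 < min (δ₀ / 2) (c / 2) := by positivity
  obtain ⟨hj', hjle'⟩ := hδ _ hδ1 ((min_le_left _ _).trans_lt (by linarith))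
  have hδc : min (δ₀ / 2) (c / 2) ≤ c / 2 := min_le_right _ _
  set δ := min (δ₀ / 2) (c / 2)
  have hj : IntegrableOn (fun q => exp (u₁ q) * |cutDeriv w₁ δ q.2|) Ω := by
    rw [← hmp.integrableOn_comp_preimage hme, hpre]; exact hj'
  have hjle : ∫ q in Ω, exp (u₁ q) * |cutDeriv w₁ δ q.2| ≤ ε := by
    rw [← hmp.setIntegral_preimage_emb hme, hpre]; exact hjle'
  obtain ⟨C, hC, hCb⟩ := deriv_smoothTransition_bound
  have hmeas : ∀ t : ℝ, AEStronglyMeasurable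
      (fun q => exp (u₁ q) * deriv smoothTransition (t + 1 - u₂ q)) (volume.restrict Ω) := by
    intro t
    refine ContinuousOn.aestronglyMeasurable ?_ hopen.measurableSet
    exact ((h₁.1.1.continuousOn.mono s₁).rexp).mul
      (deriv_smoothTransition_continuous.comp_continuousOn
        (continuousOn_const.sub (h₂.1.1.continuousOn.mono s₂)))
  have hbd : ∀ t : ℝ, ∀ q, ‖exp (u₁ q) * deriv smoothTransition (t + 1 - u₂ q)‖ ≤
      exp (u₁ q) * C := by
    intro t q
    rw [norm_of_nonneg (mul_nonneg (exp_pos _).le (deriv_smoothTransition_nonneg _))]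
    exact mul_le_mul_of_nonneg_left (hCb _) (exp_pos _).le
  have hi : ∀ t : ℝ, IntegrableOn
      (fun q => exp (u₁ q) * deriv smoothTransition (t + 1 - u₂ q)) Ω := fun t =>
    (hE.mul_const C).mono' (hmeas t) (Eventually.of_forall (hbd t))
  have hlim : Tendsto (fun t : ℝ => ∫ q in Ω,
      exp (u₁ q) * deriv smoothTransition (t + 1 - u₂ q)) atTop (nhds 0) := by
    have := tendsto_integral_filter_of_dominated_convergence (μ := volume.restrict Ω)
      (l := (atTop : Filter ℝ)) (f := fun _ => (0 : ℝ)) (fun q => exp (u₁ q) * C)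
      (Eventually.of_forall hmeas) (Eventually.of_forall fun t => Eventually.of_forall (hbd t))
      (hE.mul_const C) (Eventually.of_forall fun q => by
        refine tendsto_const_nhds.congr' ?_
        filter_upwards [eventually_ge_atTop (u₂ q)] with t ht
        rw [deriv_smoothTransition_eq_zero (Or.inr (by linarith)), mul_zero])
    simpa using this
  have hfin : 2 * ε ≤ 0 := by
    refine ge_of_tendsto hlim ?_
    filter_upwards [eventually_ge_atTop (u₂ q₀ + 1)] with t ht
    have := flux_estimate h₁ h₂ hw hL hδ1 (κ := κ) (t := t) (B := B) Metric.isOpen_ball.measurableSet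
      (fun q hq => (hB q hq).1.1) hBf (fun q hq => (hB q hq).1.2.le)
      (fun q hq => (hB q hq).2.1.le.trans ht)
      (fun q hq => by linarith [(hB q hq).2.2]) (hi t) hj
    linarith
  linarith

lemma sub_const_of_bvp {α w₁ w₂ L₁ L₂ : ℝ} {u₁ u₂ : ℝ × ℝ → ℝ} (hα : α ∈ Ioo 0 π) (hw₁ : 0 < w₁)
    (hL₁ : 0 < L₁) (h₁ : ScherkBVP α w₁ L₁ u₁)
    (h₂ : ScherkBVP α w₂ L₂ u₂) (hw : w₁ ≤ w₂) (hL : L₂ ≤ L₁) :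
    ∃ c : ℝ, ∀ q ∈ Pgram α w₁ L₂, u₁ q = u₂ q + c := by
  have s₁ : Pgram α w₁ L₂ ⊆ Pgram α w₁ L₁ := pgram_mono le_rfl hL
  have s₂ : Pgram α w₁ L₂ ⊆ Pgram α w₂ L₂ := pgram_mono hw le_rfl
  obtain ⟨c, hc⟩ := (pgram_isOpen α w₁ L₂).exists_eq_add_of_fderiv_eq (𝕜 := ℝ)
    (pgram_isPreconnected α w₁ L₂)
    (fun q hq => ((contDiffAt_two (pgram_isOpen _ _ _) h₁.1 (s₁ hq)).differentiableAt
      (by simp)).differentiableWithinAt)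
    (fun q hq => ((contDiffAt_two (pgram_isOpen _ _ _) h₂.1 (s₂ hq)).differentiableAt
      (by simp)).differentiableWithinAt)
    (fun q hq => by
      obtain ⟨hx, hy⟩ := (excess_eq u₁ u₂ q).2 (excess_eq_zero hα hw₁ hL₁ h₁ h₂ hw hL hq)
      refine ContinuousLinearMap.ext fun v => ?_
      have e : v = v.1 • ((1, 0) : ℝ × ℝ) + v.2 • ((0, 1) : ℝ × ℝ) := by simp
      rw [e]
      simp only [map_add, map_smul]
      rw [show fderiv ℝ u₁ q (1, 0) = fderiv ℝ u₂ q (1, 0) from hx,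
        show fderiv ℝ u₁ q (0, 1) = fderiv ℝ u₂ q (0, 1) from hy])
  exact ⟨c, fun q hq => hc hq⟩

/-- monotonicity/uniqueness: if `w₁ ≤ w₂` and `L₁ ≥ L₂` then the parameters
agree and the two Scherk translators differ by a constant. -/
theorem scherk_translator_monotone (α : ℝ) (hα : α ∈ Set.Ioo 0 π)
    (w₁ w₂ L₁ L₂ : ℝ) (hw₁ : 0 < w₁) (hw₂ : 0 < w₂) (hL₁ : 0 < L₁) (hL₂ : 0 < L₂)
    (u₁ u₂ : ℝ × ℝ → ℝ) (h₁ : ScherkBVP α w₁ L₁ u₁) (h₂ : ScherkBVP α w₂ L₂ u₂)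
    (hw : w₁ ≤ w₂) (hL : L₂ ≤ L₁) :
    w₁ = w₂ ∧ L₁ = L₂ ∧ ∃ c : ℝ, ∀ p ∈ Pgram α w₁ L₁, u₁ p - u₂ p = c := by
  obtain ⟨c, hc⟩ := sub_const_of_bvp hα hw₁ hL₁ h₁ h₂ hw hL
  have s₁ : Pgram α w₁ L₂ ⊆ Pgram α w₁ L₁ := pgram_mono le_rfl hL
  have s₂ : Pgram α w₁ L₂ ⊆ Pgram α w₂ L₂ := pgram_mono hw le_rfl
  -- If `w₁ < w₂`, then `u₁ → -∞` at an interior point of the domain of `u₂`.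
  have hweq : w₁ = w₂ := by
    by_contra hne
    have hlt : w₁ < w₂ := lt_of_le_of_ne hw hne
    set z := shear α (L₂ / 2, w₁) with hz
    have hpath : Tendsto (fun y => shear α (L₂ / 2, y)) (nhdsWithin w₁ (Iio w₁)) (nhds z) :=
      ((shear α).continuous.comp (by fun_prop : Continuous fun y : ℝ => (L₂ / 2, y))).continuousAt.mono_left
        nhdsWithin_le_nhds
    have hin : ∀ᶠ y in nhdsWithin w₁ (Iio w₁), shear α (L₂ / 2, y) ∈ Pgram α w₁ L₂ := by
      filter_upwards [Ioo_mem_nhdsLT hw₁] with y hy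
      exact shear_mem ⟨by linarith, by linarith⟩ hy
    have hz2 : z ∈ Pgram α w₂ L₂ := shear_mem ⟨by linarith, by linarith⟩ ⟨hw₁, hlt⟩
    have t2 : Tendsto (fun y => u₂ (shear α (L₂ / 2, y)) + c) (nhdsWithin w₁ (Iio w₁))
        (nhds (u₂ z + c)) :=
      ((contDiffAt_two (pgram_isOpen _ _ _) h₂.1 hz2).continuousAt.tendsto.comp hpath).add_const c
    have t1 : Tendsto (fun y => u₁ (shear α (L₂ / 2, y))) (nhdsWithin w₁ (Iio w₁)) atBot := by
      refine (h₁.2.2.1 (L₂ / 2 + w₁ * cos α / sin α) (by linarith) (by linarith)).comp ?_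
      exact tendsto_nhdsWithin_iff.2 ⟨hpath, hin.mono fun y hy => s₁ hy⟩
    exact not_tendsto_nhds_of_tendsto_atBot t1 _
      (t2.congr' (hin.mono fun y hy => (hc _ hy).symm))
  -- If `L₂ < L₁`, then `u₂ → +∞` at an interior point of the domain of `u₁`.
  have hLeq : L₁ = L₂ := by
    by_contra hne
    have hlt : L₂ < L₁ := lt_of_le_of_ne hL (Ne.symm hne)
    set z := shear α (L₂, w₁ / 2) with hz
    have hpath : Tendsto (fun x => shear α (x, w₁ / 2)) (nhdsWithin L₂ (Iio L₂)) (nhds z) :=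
      ((shear α).continuous.comp (by fun_prop : Continuous fun x : ℝ => (x, w₁ / 2))).continuousAt.mono_left
        nhdsWithin_le_nhds
    have hin : ∀ᶠ x in nhdsWithin L₂ (Iio L₂), shear α (x, w₁ / 2) ∈ Pgram α w₁ L₂ := by
      filter_upwards [Ioo_mem_nhdsLT hL₂] with x hx
      exact shear_mem hx ⟨by linarith, by linarith⟩
    have hz1 : z ∈ Pgram α w₁ L₁ := shear_mem ⟨hL₂, hlt⟩ ⟨by linarith, by linarith⟩
    have t1 : Tendsto (fun x => u₁ (shear α (x, w₁ / 2))) (nhdsWithin L₂ (Iio L₂))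
        (nhds (u₁ z)) :=
      (contDiffAt_two (pgram_isOpen _ _ _) h₁.1 hz1).continuousAt.tendsto.comp hpath
    have t2 : Tendsto (fun x => u₂ (shear α (x, w₁ / 2))) (nhdsWithin L₂ (Iio L₂)) atTop := by
      refine (h₂.2.2.2.2 (w₁ / 2) (by linarith) (by linarith)).comp ?_
      exact tendsto_nhdsWithin_iff.2 ⟨hpath, hin.mono fun y hy => s₂ hy⟩
    exact not_tendsto_nhds_of_tendsto_atTop (tendsto_atTop_add_const_right _ c t2) _
      (t1.congr' (hin.mono fun y hy => hc _ hy))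
  refine ⟨hweq, hLeq, c, fun p hp => ?_⟩
  rw [hLeq] at hp
  rw [hc p hp]; ring
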